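/- arXiv:1712.01490 — 7 statements merged into one kernel-verified Lean document; each statement's English description precedes it below -/
import Mathlib

section
/- Let K be an infinite field and n > 3. Let Φ be a group automorphism of TAut₀(K⟨x₁,…,xₙ⟩) that fixes every diagonal automorphism xᵢ ↦ λᵢxᵢ (λᵢ ∈ K^×). Then Φ maps the set of origin-preserving elementary automorphisms of K⟨x₁,…,xₙ⟩ bijectively onto itself. -/
/-!
For a unit `s`, let `tᵢ(s)` be the diagonal automorphism multiplying `xᵢ` by `s`. An automorphism
`g` is elementary in `xᵢ` exactly when its conjugates `g_s = tᵢ(s)⁻¹ g tᵢ(s)` depend additively on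
`s`, that is, `g_t g_s = g_{s+t}`. If `g` is `xᵢ ↦ xᵢ + P`, then `g_s` is `xᵢ ↦ xᵢ + s P`.
Conversely, let `pₖ` be the component of `g xⱼ` of degree `k` in `xᵢ`, and let `ε` be `1` if
`j = i` and `0` otherwise. Then `g_{s+1} = g g_s` reads
`∑ₖ (s + 1)^(ε-k) pₖ = ∑ₖ s^(ε-k) g(pₖ)`. The right side has no pole at `s = -1`, so `pₖ = 0` for
`k > ε`. Thus `g xⱼ` does not involve `xᵢ` for `j ≠ i`, while `g xᵢ` has degree at most one in `xᵢ`,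
and for such `g` the identity `g_{s+1} = g g_s` forces `g` to be elementary.

Additivity of the conjugates is expressed through products and diagonal automorphisms alone, so a
multiplicative bijection that fixes the diagonal automorphisms preserves it.
-/

namespace Stmt6

variable (K : Type*) [Field K] (n : ℕ)

/-- The augmentation homomorphism of the free associative algebra, sending every
generator to `0`. Its kernel is the augmentation ideal. -/
noncomputable def aug : FreeAlgebra K (Fin n) →ₐ[K] K :=
  FreeAlgebra.lift K (fun _ : Fin n => (0 : K))

/-- An automorphism is origin-preserving if it maps the augmentation ideal
(the kernel of the augmentation) into itself. -/
def OriginPres (φ : FreeAlgebra K (Fin n) ≃ₐ[K] FreeAlgebra K (Fin n)) : Prop :=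
  ∀ p : FreeAlgebra K (Fin n), aug K n p = 0 → aug K n (φ p) = 0

/-- Linear automorphisms: each generator is sent to a linear form. -/
def IsLinearAut (φ : FreeAlgebra K (Fin n) ≃ₐ[K] FreeAlgebra K (Fin n)) : Prop :=
  ∃ a : Fin n → Fin n → K, ∀ i, φ (FreeAlgebra.ι K i) = ∑ j, a i j • FreeAlgebra.ι K j

/-- Diagonal automorphisms: `xᵢ ↦ λᵢ xᵢ` with all `λᵢ ∈ K^×`. -/
def IsDiagonal (φ : FreeAlgebra K (Fin n) ≃ₐ[K] FreeAlgebra K (Fin n)) : Prop :=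
  ∃ l : Fin n → K, (∀ i, l i ≠ 0) ∧ ∀ i, φ (FreeAlgebra.ι K i) = l i • FreeAlgebra.ι K i

/-- Elementary automorphisms: `xᵢ ↦ xᵢ + P`, `xⱼ ↦ xⱼ` for `j ≠ i`, where `P` does not
involve `xᵢ`. -/
def IsElementary (φ : FreeAlgebra K (Fin n) ≃ₐ[K] FreeAlgebra K (Fin n)) : Prop :=
  ∃ i : Fin n, (∀ j, j ≠ i → φ (FreeAlgebra.ι K j) = FreeAlgebra.ι K j) ∧
    ∃ P ∈ Algebra.adjoin K (FreeAlgebra.ι K '' ({i}ᶜ : Set (Fin n))),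
      φ (FreeAlgebra.ι K i) = FreeAlgebra.ι K i + P

/-- The tame automorphism group: generated by linear and elementary automorphisms. -/
noncomputable def TAut : Subgroup (FreeAlgebra K (Fin n) ≃ₐ[K] FreeAlgebra K (Fin n)) :=
  Subgroup.closure {φ | IsLinearAut K n φ ∨ IsElementary K n φ}

/-- The set of origin-preserving tame automorphisms. -/
def TAut0 : Set (FreeAlgebra K (Fin n) ≃ₐ[K] FreeAlgebra K (Fin n)) :=
  {φ | φ ∈ TAut K n ∧ OriginPres K n φ}

section Pole

open Polynomial

/-- After clearing denominators, only the leading term of `p` survives at `s = -1`. -/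
theorem natDegree_le_of_eval_inv_add_one {K : Type*} [Field K] [Infinite K] {p q : K[X]} {ε : ℕ}
    (h : ∀ s : K, s ≠ 0 → s + 1 ≠ 0 →
      (s + 1) ^ ε * p.eval (s + 1)⁻¹ = s ^ ε * q.eval s⁻¹) :
    p.natDegree ≤ ε := by
  have eval_reverse {s : K} (hs : s ≠ 0) (r : K[X]) :
      r.reverse.eval s = s ^ r.natDegree * r.eval s⁻¹ := by
    let := invertibleOfNonzero (inv_ne_zero hs)
    have := eval₂_reverse_mul_pow (RingHom.id K) s⁻¹ r
    simp only [invOf_eq_inv, inv_inv, ← eval_map, map_id] at this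
    rw [← this, mul_left_comm, ← mul_pow, mul_inv_cancel₀ hs, one_pow, mul_one]
  by_contra! hlt
  obtain ⟨d, hd⟩ := Nat.exists_eq_add_of_lt hlt
  have cleared : X ^ q.natDegree * p.reverse.comp (X + 1) =
      X ^ ε * (X + 1) ^ (d + 1) * q.reverse := by
    refine eq_of_infinite_eval_eq _ _ ((Set.toFinite {0, -1}).infinite_compl.mono fun s hs => ?_)
    obtain ⟨hs, hs1⟩ : s ≠ 0 ∧ s + 1 ≠ 0 := by
      simpa [eq_neg_iff_add_eq_zero] using hs
    simp only [Set.mem_ofPred_eq, eval_mul, eval_pow, eval_comp, eval_add, eval_X, eval_one,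
      eval_reverse hs, eval_reverse hs1, hd]
    linear_combination s ^ q.natDegree * (s + 1) ^ (d + 1) * h s hs hs1
  have lead : p.leadingCoeff = 0 := by
    simpa [eval_comp, ← coeff_zero_eq_eval_zero] using congrArg (eval (-1)) cleared
  simp [leadingCoeff_eq_zero.mp lead] at hlt

theorem exists_coeff_eq_dual_and_eval_eq_dual {R A : Type*} [CommSemiring R] [Semiring A]
    [Algebra R A] (l : Module.Dual R A) (P : A[X]) :
    ∃ p : R[X], (∀ k, p.coeff k = l (P.coeff k)) ∧
      ∀ s, p.eval s = l (P.eval (algebraMap R A s)) := by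
  induction P using Polynomial.induction_on' with
  | add P Q hP hQ =>
    obtain ⟨p, p_coeff, p_eval⟩ := hP
    obtain ⟨q, q_coeff, q_eval⟩ := hQ
    exact ⟨p + q, fun k => by simp [p_coeff, q_coeff], fun s => by simp [p_eval, q_eval]⟩
  | monomial k a =>
    refine ⟨monomial k (l a), fun m => ?_, fun s => ?_⟩
    · simp only [coeff_monomial, apply_ite l, map_zero]
    · rw [eval_monomial, eval_monomial, ← map_pow, ← Algebra.commutes, ← Algebra.smul_def,
        map_smul, smul_eq_mul, mul_comm]

theorem natDegree_le_of_eval_algebraMap_inv_add_one {K A : Type*} [Field K] [Infinite K] [Ring A]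
    [Algebra K A] {P Q : A[X]} {ε : ℕ}
    (h : ∀ s : K, s ≠ 0 → s + 1 ≠ 0 →
      (s + 1) ^ ε • P.eval (algebraMap K A (s + 1)⁻¹) = s ^ ε • Q.eval (algebraMap K A s⁻¹)) :
    P.natDegree ≤ ε := by
  rcases eq_or_ne P 0 with rfl | hP
  · simp
  obtain ⟨l, hl⟩ := Module.Projective.exists_dual_ne_zero K (leadingCoeff_ne_zero.mpr hP)
  obtain ⟨p, p_coeff, p_eval⟩ := exists_coeff_eq_dual_and_eval_eq_dual l P
  obtain ⟨q, -, q_eval⟩ := exists_coeff_eq_dual_and_eval_eq_dual l Q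
  calc P.natDegree ≤ p.natDegree := le_natDegree_of_ne_zero (by rwa [p_coeff])
    _ ≤ ε := natDegree_le_of_eval_inv_add_one (q := q) fun s hs hs1 => by
      simpa [p_eval, q_eval] using congrArg l (h s hs hs1)

end Pole

section Avoiding

variable {R σ : Type*} [CommSemiring R]

theorem algEquiv_ext_ι {g h : FreeAlgebra R σ ≃ₐ[R] FreeAlgebra R σ}
    (hgh : ∀ j, g (FreeAlgebra.ι R j) = h (FreeAlgebra.ι R j)) : g = h :=
  AlgEquiv.coe_toAlgHom_injective (FreeAlgebra.hom_ext (funext hgh))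

variable (R) in
/-- The subalgebra of the elements that do not involve the generator `i`. -/
abbrev avoiding (i : σ) : Subalgebra R (FreeAlgebra R σ) :=
  Algebra.adjoin R (FreeAlgebra.ι R '' {i}ᶜ)

theorem map_eq_self_of_mem_avoiding {i : σ} {f : FreeAlgebra R σ →ₐ[R] FreeAlgebra R σ}
    (hf : ∀ j, j ≠ i → f (FreeAlgebra.ι R j) = FreeAlgebra.ι R j) {p : FreeAlgebra R σ}
    (hp : p ∈ avoiding R i) : f p = p :=
  f.adjoin_le_equalizer (AlgHom.id R _) (Set.forall_mem_image.mpr hf) hp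

/-- Elementary automorphisms changing only the generator `i`, over any set of generators. For
`σ = Fin n`, the predicate `IsElementary K n` is by definition `∃ i, IsElementaryAt i`. -/
def IsElementaryAt (i : σ) (g : FreeAlgebra R σ ≃ₐ[R] FreeAlgebra R σ) : Prop :=
  (∀ j, j ≠ i → g (FreeAlgebra.ι R j) = FreeAlgebra.ι R j) ∧
    ∃ P ∈ avoiding R i, g (FreeAlgebra.ι R i) = FreeAlgebra.ι R i + P

end Avoiding

section Scaling

variable {R σ : Type*} [CommSemiring R] [DecidableEq σ]

/-- The endomorphism multiplying the generator `i` by `s` and fixing the others, as a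
multiplicative function of `s`. -/
def scale (i : σ) : R →* FreeAlgebra R σ →ₐ[R] FreeAlgebra R σ where
  toFun s := FreeAlgebra.lift R fun j => (Pi.mulSingle i s : σ → R) j • FreeAlgebra.ι R j
  map_one' := by ext j; simp
  map_mul' s t := by ext j; simp [Pi.mulSingle_mul, smul_smul, mul_comm]

theorem scale_ι (i j : σ) (s : R) : scale i s (FreeAlgebra.ι R j) =
    (Pi.mulSingle i s : σ → R) j • FreeAlgebra.ι R j :=
  FreeAlgebra.lift_ι_apply _ _

@[simp]
theorem scale_ι_self (i : σ) (s : R) :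
    scale i s (FreeAlgebra.ι R i) = s • FreeAlgebra.ι R i := by
  simp [scale_ι]

theorem scale_ι_of_ne {i j : σ} (hj : j ≠ i) (s : R) :
    scale i s (FreeAlgebra.ι R j) = FreeAlgebra.ι R j := by
  simp [scale_ι, hj]

theorem scale_zero_mem_avoiding (i : σ) (p : FreeAlgebra R σ) : scale i 0 p ∈ avoiding R i := by
  have : Algebra.adjoin R (Set.range (FreeAlgebra.ι R)) ≤ (avoiding R i).comap (scale i 0) := by
    refine Algebra.adjoin_le (Set.range_subset_iff.mpr fun j => ?_)
    rcases eq_or_ne j i with rfl | hj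
    · simp
    · simpa [scale_ι_of_ne hj] using Algebra.subset_adjoin (Set.mem_image_of_mem _ hj)
  exact this (FreeAlgebra.adjoin_range_ι R σ ▸ Algebra.mem_top)

/-- The automorphism multiplying the generator `i` by a unit, as a homomorphism from the group
of units. -/
def scaleAut (i : σ) : Rˣ →* FreeAlgebra R σ ≃ₐ[R] FreeAlgebra R σ :=
  (AlgEquiv.algHomUnitsEquiv R (FreeAlgebra R σ)).toMonoidHom.comp (Units.map (scale i))

theorem scaleAut_apply (i : σ) (s : Rˣ) (p : FreeAlgebra R σ) :
    scaleAut i s p = scale i (s : R) p := rfl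

/-- The conjugate of `g` by `scaleAut i s`. For `g` elementary at `i`, this multiplies the
polynomial added to the generator `i` by `s`. -/
def scaleConj (i : σ) (g : FreeAlgebra R σ ≃ₐ[R] FreeAlgebra R σ) (s : Rˣ) :
    FreeAlgebra R σ ≃ₐ[R] FreeAlgebra R σ :=
  scaleAut i s⁻¹ * g * scaleAut i s

@[simp]
theorem scaleConj_one (i : σ) (g : FreeAlgebra R σ ≃ₐ[R] FreeAlgebra R σ) :
    scaleConj i g 1 = g := by
  simp [scaleConj]

theorem scaleConj_ι_self (i : σ) (g : FreeAlgebra R σ ≃ₐ[R] FreeAlgebra R σ) (s : Rˣ) :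
    scaleConj i g s (FreeAlgebra.ι R i) =
      (s : R) • scale i ((s⁻¹ : Rˣ) : R) (g (FreeAlgebra.ι R i)) := by
  simp only [scaleConj, AlgEquiv.mul_apply, scaleAut_apply, scale_ι_self, map_smul]

theorem scaleConj_ι_of_ne {i j : σ} (hj : j ≠ i) (g : FreeAlgebra R σ ≃ₐ[R] FreeAlgebra R σ)
    (s : Rˣ) : scaleConj i g s (FreeAlgebra.ι R j) =
      scale i ((s⁻¹ : Rˣ) : R) (g (FreeAlgebra.ι R j)) := by
  simp only [scaleConj, AlgEquiv.mul_apply, scaleAut_apply, scale_ι_of_ne hj]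

/-- Additivity of `s ↦ scaleConj i g s`. Only units are available for scaling, so this concerns
those units `s` and `t` whose sum is a unit as well. -/
def IsScaleAdditive (i : σ) (g : FreeAlgebra R σ ≃ₐ[R] FreeAlgebra R σ) : Prop :=
  ∀ s t u : Rˣ, (u : R) = s + t → scaleConj i g t * scaleConj i g s = scaleConj i g u

theorem IsScaleAdditive.scaleConj_eq_mul {i : σ} {g : FreeAlgebra R σ ≃ₐ[R] FreeAlgebra R σ}
    (hg : IsScaleAdditive i g) {s t : Rˣ} (ht : (t : R) = s + 1) :
    scaleConj i g t = g * scaleConj i g s := by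
  rw [← hg s 1 t ht, scaleConj_one]

theorem IsElementaryAt.isScaleAdditive {i : σ} {g : FreeAlgebra R σ ≃ₐ[R] FreeAlgebra R σ}
    (hg : IsElementaryAt i g) : IsScaleAdditive i g := by
  obtain ⟨g_ne, P, hP, g_self⟩ := hg
  have scale_P (s : R) : scale i s P = P :=
    map_eq_self_of_mem_avoiding (fun _ hj => scale_ι_of_ne hj s) hP
  have conj_ne (s : Rˣ) (j : σ) (hj : j ≠ i) :
      scaleConj i g s (FreeAlgebra.ι R j) = FreeAlgebra.ι R j := by
    rw [scaleConj_ι_of_ne hj, g_ne j hj, scale_ι_of_ne hj]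
  have conj_self (s : Rˣ) :
      scaleConj i g s (FreeAlgebra.ι R i) = FreeAlgebra.ι R i + (s : R) • P := by
    rw [scaleConj_ι_self, g_self, map_add, scale_P, scale_ι_self, smul_add, smul_smul,
      Units.mul_inv, one_smul]
  have conj_P (s : Rˣ) : scaleConj i g s P = P :=
    map_eq_self_of_mem_avoiding (f := (scaleConj i g s).toAlgHom) (conj_ne s) hP
  intro s t u hu
  refine algEquiv_ext_ι fun j => ?_
  rw [AlgEquiv.mul_apply]
  rcases eq_or_ne j i with rfl | hj
  · rw [conj_self, conj_self, map_add, map_smul, conj_P, conj_self, hu, add_smul, add_assoc,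
      add_comm ((t : R) • P)]
  · rw [conj_ne s j hj, conj_ne t j hj, conj_ne u j hj]

end Scaling

section DegreeExpansion

variable {R σ : Type*} [CommSemiring R] [DecidableEq σ]

/-- The expansion of an element of the free algebra by degree in the generator `i`: the
coefficient of `Xᵏ` is the component of degree `k`. -/
noncomputable def degreeExpansion (i : σ) : FreeAlgebra R σ →ₐ[R] Polynomial (FreeAlgebra R σ) :=
  FreeAlgebra.lift R fun j =>
    Polynomial.C (FreeAlgebra.ι R j) * (Pi.mulSingle i Polynomial.X : σ → Polynomial _) j

theorem eval_degreeExpansion (i : σ) (s : R) (p : FreeAlgebra R σ) :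
    (degreeExpansion i p).eval (algebraMap R _ s) = scale i s p := by
  let evalHom : Polynomial (FreeAlgebra R σ) →ₐ[R] FreeAlgebra R σ :=
    Polynomial.eval₂AlgHom (AlgHom.id R _) (algebraMap R _ s) fun p => (Algebra.commutes s p).symm
  suffices evalHom.comp (degreeExpansion i) = scale i s from DFunLike.congr_fun this p
  ext j
  change (degreeExpansion i (FreeAlgebra.ι R j)).eval _ = scale i s (FreeAlgebra.ι R j)
  rcases eq_or_ne j i with rfl | hj
  · simp [degreeExpansion, ← Algebra.commutes, Algebra.smul_def]
  · simp [degreeExpansion, hj, scale_ι_of_ne hj]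

theorem coeff_zero_degreeExpansion_mem_avoiding (i : σ) (p : FreeAlgebra R σ) :
    (degreeExpansion i p).coeff 0 ∈ avoiding R i := by
  rw [Polynomial.coeff_zero_eq_eval_zero, ← map_zero (algebraMap R _), eval_degreeExpansion]
  exact scale_zero_mem_avoiding i p

theorem scale_of_natDegree_degreeExpansion_le_zero {i : σ} {p : FreeAlgebra R σ}
    (hp : (degreeExpansion i p).natDegree ≤ 0) (s : R) :
    scale i s p = (degreeExpansion i p).coeff 0 := by
  rw [← eval_degreeExpansion, Polynomial.eq_C_of_natDegree_le_zero hp]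
  simp

theorem scale_of_natDegree_degreeExpansion_le_one {i : σ} {p : FreeAlgebra R σ}
    (hp : (degreeExpansion i p).natDegree ≤ 1) (s : R) :
    scale i s p = (degreeExpansion i p).coeff 0 + s • (degreeExpansion i p).coeff 1 := by
  rw [← eval_degreeExpansion, Polynomial.eq_X_add_C_of_natDegree_le_one hp]
  simp [← Algebra.commutes, Algebra.smul_def, add_comm]

end DegreeExpansion

section Characterization

variable {K σ : Type*} [Field K] [Infinite K] [DecidableEq σ]

theorem natDegree_degreeExpansion_le {i : σ} {ε : ℕ} {p : FreeAlgebra K σ}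
    (g : FreeAlgebra K σ ≃ₐ[K] FreeAlgebra K σ)
    (h : ∀ s : K, s ≠ 0 → s + 1 ≠ 0 →
      (s + 1) ^ ε • scale i (s + 1)⁻¹ p = g (s ^ ε • scale i s⁻¹ p)) :
    (degreeExpansion i p).natDegree ≤ ε := by
  refine natDegree_le_of_eval_algebraMap_inv_add_one (K := K)
    (Q := (degreeExpansion i p).map (g : FreeAlgebra K σ →+* FreeAlgebra K σ)) fun s hs hs1 => ?_
  have eval_map_g : ((degreeExpansion i p).map (g : FreeAlgebra K σ →+* FreeAlgebra K σ)).eval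
      (algebraMap K _ s⁻¹) = g (scale i s⁻¹ p) := by
    simpa [eval_degreeExpansion] using Polynomial.eval_map_apply (p := degreeExpansion i p)
      (g : FreeAlgebra K σ →+* FreeAlgebra K σ) (algebraMap K _ s⁻¹)
  rw [eval_degreeExpansion, eval_map_g, h s hs hs1, map_smul]

theorem exists_units_eq_add_one (K : Type*) [Field K] [Infinite K] :
    ∃ s t : Kˣ, (t : K) = s + 1 := by
  obtain ⟨s, hs⟩ := (Set.toFinite {(0 : K), -1}).infinite_compl.nonempty
  obtain ⟨hs, hs1⟩ : s ≠ 0 ∧ s + 1 ≠ 0 := by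
    simpa [eq_neg_iff_add_eq_zero] using hs
  exact ⟨.mk0 s hs, .mk0 (s + 1) hs1, rfl⟩

namespace IsScaleAdditive

variable {i : σ} {g : FreeAlgebra K σ ≃ₐ[K] FreeAlgebra K σ}

theorem natDegree_self_le (hg : IsScaleAdditive i g) :
    (degreeExpansion i (g (FreeAlgebra.ι K i))).natDegree ≤ 1 := by
  refine natDegree_degreeExpansion_le g fun s hs hs1 => ?_
  have := hg.scaleConj_eq_mul (s := .mk0 s hs) (t := .mk0 (s + 1) hs1) rfl
  simpa [scaleConj_ι_self] using DFunLike.congr_fun this (FreeAlgebra.ι K i)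

theorem natDegree_le_zero_of_ne (hg : IsScaleAdditive i g) {j : σ} (hj : j ≠ i) :
    (degreeExpansion i (g (FreeAlgebra.ι K j))).natDegree ≤ 0 := by
  refine natDegree_degreeExpansion_le g fun s hs hs1 => ?_
  have := hg.scaleConj_eq_mul (s := .mk0 s hs) (t := .mk0 (s + 1) hs1) rfl
  simpa [scaleConj_ι_of_ne hj] using DFunLike.congr_fun this (FreeAlgebra.ι K j)

theorem apply_ι_of_ne (hg : IsScaleAdditive i g) {j : σ} (hj : j ≠ i) :
    g (FreeAlgebra.ι K j) = FreeAlgebra.ι K j := by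
  have conj_eq (s : Kˣ) : scaleConj i g s (FreeAlgebra.ι K j) = g (FreeAlgebra.ι K j) := by
    have degree_zero := hg.natDegree_le_zero_of_ne hj
    rw [scaleConj_ι_of_ne hj, scale_of_natDegree_degreeExpansion_le_zero degree_zero,
      ← scale_of_natDegree_degreeExpansion_le_zero degree_zero 1, map_one, AlgHom.one_apply]
  obtain ⟨s, t, hst⟩ := exists_units_eq_add_one K
  refine (g.injective ?_).symm
  calc g (FreeAlgebra.ι K j) = scaleConj i g t (FreeAlgebra.ι K j) := (conj_eq t).symm
    _ = g (scaleConj i g s (FreeAlgebra.ι K j)) := by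
      rw [hg.scaleConj_eq_mul hst, AlgEquiv.mul_apply]
    _ = g (g (FreeAlgebra.ι K j)) := by rw [conj_eq]

theorem isElementaryAt (hg : IsScaleAdditive i g) : IsElementaryAt i g := by
  set a := (degreeExpansion i (g (FreeAlgebra.ι K i))).coeff 0
  set b := (degreeExpansion i (g (FreeAlgebra.ι K i))).coeff 1
  have a_mem : a ∈ avoiding K i := coeff_zero_degreeExpansion_mem_avoiding i _
  have g_a : g a = a :=
    map_eq_self_of_mem_avoiding (f := g.toAlgHom) (fun _ hj => hg.apply_ι_of_ne hj) a_mem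
  have conj_self (s : Kˣ) : scaleConj i g s (FreeAlgebra.ι K i) = (s : K) • a + b := by
    rw [scaleConj_ι_self, scale_of_natDegree_degreeExpansion_le_one hg.natDegree_self_le,
      smul_add, smul_smul, Units.mul_inv, one_smul]
  have g_self : g (FreeAlgebra.ι K i) = a + b := by simpa using conj_self 1
  obtain ⟨s, t, hst⟩ := exists_units_eq_add_one K
  have g_b : (s : K) • a + g (FreeAlgebra.ι K i) = (s : K) • a + g b :=
    calc (s : K) • a + g (FreeAlgebra.ι K i) = (t : K) • a + b := by
          rw [g_self, hst, add_smul, one_smul, add_assoc]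
      _ = g (scaleConj i g s (FreeAlgebra.ι K i)) := by
          rw [← conj_self, hg.scaleConj_eq_mul hst, AlgEquiv.mul_apply]
      _ = (s : K) • a + g b := by rw [conj_self, map_add, map_smul, g_a]
  have b_eq : FreeAlgebra.ι K i = b := g.injective (add_left_cancel g_b)
  exact ⟨fun _ hj => hg.apply_ι_of_ne hj, a, a_mem, by rw [g_self, ← b_eq, add_comm]⟩

end IsScaleAdditive

theorem isElementaryAt_iff_isScaleAdditive {i : σ} {g : FreeAlgebra K σ ≃ₐ[K] FreeAlgebra K σ} :
    IsElementaryAt i g ↔ IsScaleAdditive i g :=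
  ⟨IsElementaryAt.isScaleAdditive, IsScaleAdditive.isElementaryAt⟩

end Characterization

section Preservation

variable {R σ : Type*} [CommSemiring R] [DecidableEq σ]
  {M : Submonoid (FreeAlgebra R σ ≃ₐ[R] FreeAlgebra R σ)} {i : σ}

theorem scaleConj_mem (hM : ∀ s, scaleAut i s ∈ M) {g : FreeAlgebra R σ ≃ₐ[R] FreeAlgebra R σ}
    (hg : g ∈ M) (s : Rˣ) : scaleConj i g s ∈ M :=
  mul_mem (mul_mem (hM s⁻¹) hg) (hM s)

theorem isScaleAdditive_map_iff (hM : ∀ s, scaleAut i s ∈ M)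
    {Φ : (FreeAlgebra R σ ≃ₐ[R] FreeAlgebra R σ) → (FreeAlgebra R σ ≃ₐ[R] FreeAlgebra R σ)}
    (hinj : Set.InjOn Φ M) (hmul : ∀ g ∈ M, ∀ h ∈ M, Φ (g * h) = Φ g * Φ h)
    (hfix : ∀ s, Φ (scaleAut i s) = scaleAut i s)
    {g : FreeAlgebra R σ ≃ₐ[R] FreeAlgebra R σ} (hg : g ∈ M) :
    IsScaleAdditive i (Φ g) ↔ IsScaleAdditive i g := by
  have map_conj (s : Rˣ) : Φ (scaleConj i g s) = scaleConj i (Φ g) s := by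
    rw [scaleConj, hmul _ (mul_mem (hM s⁻¹) hg) _ (hM s), hmul _ (hM s⁻¹) _ hg, hfix, hfix,
      scaleConj]
  have conj_mem (s : Rˣ) : scaleConj i g s ∈ M := scaleConj_mem hM hg s
  refine forall₄_congr fun s t u _ => ?_
  rw [← map_conj, ← map_conj, ← map_conj, ← hmul _ (conj_mem t) _ (conj_mem s)]
  exact hinj.eq_iff (mul_mem (conj_mem t) (conj_mem s)) (conj_mem u)

end Preservation

theorem preserves_elementary_general {K σ : Type*} [Field K] [Infinite K] [DecidableEq σ]
    {M : Submonoid (FreeAlgebra K σ ≃ₐ[K] FreeAlgebra K σ)}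
    (hM : ∀ (i : σ) s, scaleAut i s ∈ M)
    {Φ : (FreeAlgebra K σ ≃ₐ[K] FreeAlgebra K σ) → (FreeAlgebra K σ ≃ₐ[K] FreeAlgebra K σ)}
    (hbij : Set.BijOn Φ M M) (hmul : ∀ g ∈ M, ∀ h ∈ M, Φ (g * h) = Φ g * Φ h)
    (hfix : ∀ (i : σ) s, Φ (scaleAut i s) = scaleAut i s) :
    Set.BijOn Φ {g ∈ M | ∃ i, IsElementaryAt i g} {g ∈ M | ∃ i, IsElementaryAt i g} := by
  have elementary_iff {g} (hg : g ∈ M) :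
      (∃ i, IsElementaryAt i (Φ g)) ↔ ∃ i, IsElementaryAt i g := by
    simp only [isElementaryAt_iff_isScaleAdditive,
      isScaleAdditive_map_iff (hM _) hbij.injOn hmul (hfix _) hg]
  refine ⟨fun g hg => ⟨hbij.mapsTo hg.1, (elementary_iff hg.1).mpr hg.2⟩,
    hbij.injOn.mono fun g hg => hg.1, fun g hg => ?_⟩
  obtain ⟨h, hh, rfl⟩ := hbij.surjOn hg.1
  exact ⟨h, ⟨hh, (elementary_iff hh).mp hg.2⟩, rfl⟩

section Tame

/-- The monoid of origin-preserving tame automorphisms; `TAut0 K n` is its underlying set. -/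
def tameOriginPres : Submonoid (FreeAlgebra K (Fin n) ≃ₐ[K] FreeAlgebra K (Fin n)) where
  carrier := TAut0 K n
  one_mem' := ⟨one_mem _, fun _ hp => hp⟩
  mul_mem' hg hh := ⟨mul_mem hg.1 hh.1, fun p hp => hg.2 _ (hh.2 p hp)⟩

variable {K n}

theorem IsDiagonal.isLinearAut {φ : FreeAlgebra K (Fin n) ≃ₐ[K] FreeAlgebra K (Fin n)}
    (hφ : IsDiagonal K n φ) : IsLinearAut K n φ := by
  obtain ⟨l, -, hl⟩ := hφ
  exact ⟨Matrix.diagonal l, fun i => by simp [hl, Matrix.diagonal_apply]⟩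

theorem IsDiagonal.originPres {φ : FreeAlgebra K (Fin n) ≃ₐ[K] FreeAlgebra K (Fin n)}
    (hφ : IsDiagonal K n φ) : OriginPres K n φ := by
  obtain ⟨l, -, hl⟩ := hφ
  have aug_comp : (aug K n).comp φ.toAlgHom = aug K n := by
    ext j; simp [aug, hl]
  exact fun p hp => (DFunLike.congr_fun aug_comp p).trans hp

theorem IsDiagonal.mem_tameOriginPres {φ : FreeAlgebra K (Fin n) ≃ₐ[K] FreeAlgebra K (Fin n)}
    (hφ : IsDiagonal K n φ) : φ ∈ tameOriginPres K n :=
  ⟨Subgroup.subset_closure (Or.inl hφ.isLinearAut), hφ.originPres⟩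

theorem isDiagonal_scaleAut (i : Fin n) (s : Kˣ) : IsDiagonal K n (scaleAut i s) := by
  refine ⟨Pi.mulSingle i (s : K), fun j => ?_, fun j => scale_ι i j (s : K)⟩
  rw [Pi.mulSingle_apply]
  split_ifs
  exacts [s.ne_zero, one_ne_zero]

variable (K n) in
theorem setOf_isElementary_and_originPres :
    {φ | IsElementary K n φ ∧ OriginPres K n φ} =
      {φ ∈ tameOriginPres K n | ∃ i, IsElementaryAt i φ} :=
  Set.ext fun _ => ⟨fun h => ⟨⟨Subgroup.subset_closure (Or.inr h.1), h.2⟩, h.1⟩,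
    fun h => ⟨h.2, h.1.2⟩⟩

end Tame

/-- A group automorphism of `TAut₀(K⟨x₁,…,xₙ⟩)` (`K` infinite, `n > 3`) fixing every
diagonal automorphism maps the set of origin-preserving elementary automorphisms
bijectively onto itself. -/
theorem preserves_elementary [Infinite K] (hn : 3 < n)
    (Φ : (FreeAlgebra K (Fin n) ≃ₐ[K] FreeAlgebra K (Fin n)) →
         (FreeAlgebra K (Fin n) ≃ₐ[K] FreeAlgebra K (Fin n)))
    (hmem : ∀ g ∈ TAut0 K n, Φ g ∈ TAut0 K n)
    (hsurj : ∀ g ∈ TAut0 K n, ∃ h ∈ TAut0 K n, Φ h = g)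
    (hinj : Set.InjOn Φ (TAut0 K n))
    (hmul : ∀ g ∈ TAut0 K n, ∀ h ∈ TAut0 K n, Φ (g * h) = Φ g * Φ h)
    (hdiag : ∀ φ, IsDiagonal K n φ → Φ φ = φ) :
    Set.BijOn Φ {φ | IsElementary K n φ ∧ OriginPres K n φ}
      {φ | IsElementary K n φ ∧ OriginPres K n φ} := by
  rw [setOf_isElementary_and_originPres]
  exact preserves_elementary_general (fun i s => (isDiagonal_scaleAut i s).mem_tameOriginPres)
    ⟨hmem, hinj, hsurj⟩ hmul fun i s => hdiag _ (isDiagonal_scaleAut i s)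

end Stmt6
end

section
/- Let K be a field. In Aut(K[x,y,z]), the subgroup generated by all linear automorphisms together with the automorphism ψ : x ↦ x, y ↦ y, z ↦ z + xy contains, for every b ∈ K and every integer m ≥ 1, the automorphism φ_m^b : x ↦ x, y ↦ y, z ↦ z + b·x^m. -/
/-!
Write `x, y, z` for the three variables. If `θ` is the shear `y ↦ y + f` and `ψ` the shear
`z ↦ z + qy`, where neither `f` nor `q` involves `y` or `z`, then `⁅θ, ψ⁆` is the shear
`z ↦ z + qf`. Conjugating `φ_m^b` by the linear automorphism that swaps `y` and `z` gives the shear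
`y ↦ y + b·x^m`, whose commutator with `ψ : z ↦ z + xy` is therefore `φ_{m+1}^b`. As `φ_1^b` is
linear, induction on `m` yields every `φ_m^b`.
-/

open MvPolynomial

namespace Stmt9

variable (K : Type*) [Field K]

/-- Linear automorphisms of `K[x,y,z]`: each variable is sent to a linear form. -/
def IsLinearAut (φ : MvPolynomial (Fin 3) K ≃ₐ[K] MvPolynomial (Fin 3) K) : Prop :=
  ∃ a : Fin 3 → Fin 3 → K, ∀ i, φ (X i) = ∑ j, C (a i j) * X j

/-- The automorphism `ψ : x ↦ x, y ↦ y, z ↦ z + xy`. -/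
def IsPsi (φ : MvPolynomial (Fin 3) K ≃ₐ[K] MvPolynomial (Fin 3) K) : Prop :=
  φ (X 0) = X 0 ∧ φ (X 1) = X 1 ∧ φ (X 2) = X 2 + X 0 * X 1

/-- The subgroup of `Aut(K[x,y,z])` generated by all linear automorphisms and `ψ`. -/
noncomputable def G : Subgroup (MvPolynomial (Fin 3) K ≃ₐ[K] MvPolynomial (Fin 3) K) :=
  Subgroup.closure {φ | IsLinearAut K φ ∨ IsPsi K φ}

section CommSemiring

variable {σ R : Type*} [CommSemiring R] {s : Set σ} {i k : σ} {p f : MvPolynomial σ R}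
  {φ ψ : MvPolynomial σ R ≃ₐ[R] MvPolynomial σ R}

theorem X_mem_supported_of_mem (hi : i ∈ s) : (X i : MvPolynomial σ R) ∈ supported R s :=
  Algebra.subset_adjoin (Set.mem_image_of_mem X hi)

theorem C_mul_X_pow_mem_supported (hi : i ∈ s) (b : R) (m : ℕ) :
    C b * X i ^ m ∈ supported R s :=
  mul_mem (Subalgebra.algebraMap_mem _ b) (pow_mem (X_mem_supported_of_mem hi) m)

theorem algHom_eqOn_supported {S : Type*} [Semiring S] [Algebra R S]
    {φ ψ : MvPolynomial σ R →ₐ[R] S} (h : ∀ l ∈ s, φ (X l) = ψ (X l)) :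
    Set.EqOn φ ψ (supported R s) :=
  AlgHom.adjoin_le_equalizer φ ψ (Set.forall_mem_image.2 h)

/-- Linear automorphisms of a polynomial ring in arbitrarily many variables over a commutative
semiring: each variable is sent to a linear form, encoded as an element of the span of the
variables. -/
def IsLinear (φ : MvPolynomial σ R ≃ₐ[R] MvPolynomial σ R) : Prop :=
  ∀ l, φ (X l) ∈ Submodule.span R (Set.range X)

/-- `φ` is the shear (elementary automorphism) that sends `X k` to `X k + p` and fixes all other
variables. When `p` involves `X k`, such a `φ` need not exist. -/
structure IsShear (k : σ) (p : MvPolynomial σ R)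
    (φ : MvPolynomial σ R ≃ₐ[R] MvPolynomial σ R) : Prop where
  apply_X_self : φ (X k) = X k + p
  apply_X_of_ne : ∀ ⦃l⦄, l ≠ k → φ (X l) = X l

theorem isLinear_renameEquiv (e : Equiv.Perm σ) : IsLinear (renameEquiv R e) := fun l => by
  simpa using Submodule.subset_span (Set.mem_range_self (e l))

namespace IsShear

theorem eq (hφ : IsShear k p φ) (hψ : IsShear k p ψ) : φ = ψ := by
  refine AlgEquiv.coe_toAlgHom_injective (algHom_ext fun l => ?_)
  obtain rfl | hl := eq_or_ne l k
  · exact hφ.apply_X_self.trans hψ.apply_X_self.symm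
  · exact (hφ.apply_X_of_ne hl).trans (hψ.apply_X_of_ne hl).symm

theorem isLinear (hφ : IsShear k p φ) (hp : p ∈ Submodule.span R (Set.range X)) :
    IsLinear φ := fun l => by
  have hX (l : σ) : (X l : MvPolynomial σ R) ∈ Submodule.span R (Set.range X) :=
    Submodule.subset_span (Set.mem_range_self l)
  obtain rfl | hl := eq_or_ne l k
  · exact hφ.apply_X_self ▸ add_mem (hX l) hp
  · exact (hφ.apply_X_of_ne hl).symm ▸ hX l

theorem apply_of_mem_supported (hφ : IsShear k p φ) (hf : f ∈ supported R {k}ᶜ) : φ f = f :=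
  algHom_eqOn_supported (φ := φ) (ψ := AlgHom.id R _) (fun _ hl => hφ.apply_X_of_ne hl) hf

theorem conj_renameEquiv (hφ : IsShear k p φ) (e : Equiv.Perm σ) :
    IsShear (e k) (rename e p) (renameEquiv R e * φ * (renameEquiv R e)⁻¹) where
  apply_X_self := by simp [AlgEquiv.aut_inv, hφ.apply_X_self]
  apply_X_of_ne l hl := by
    have hl' : e.symm l ≠ k := fun h => hl (e.symm_apply_eq.1 h)
    simp [AlgEquiv.aut_inv, hφ.apply_X_of_ne hl']

end IsShear

end CommSemiring

section CommRing

open scoped commutatorElement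

variable {σ R : Type*} [CommRing R] {i j k : σ} {p q f : MvPolynomial σ R}
  {φ ψ θ : MvPolynomial σ R ≃ₐ[R] MvPolynomial σ R}

theorem exists_isShear (hp : p ∈ supported R {k}ᶜ) : ∃ φ, IsShear k p φ := by
  classical
  let shear (r : MvPolynomial σ R) : MvPolynomial σ R →ₐ[R] MvPolynomial σ R :=
    aeval (Function.update X k (X k + r))
  have shear_X_self (r) : shear r (X k) = X k + r := by simp [shear]
  have shear_X_of_ne (r) (l) (hl : l ≠ k) : shear r (X l) = X l := by simp [shear, hl]
  have shear_p (r) : shear r p = p :=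
    algHom_eqOn_supported (ψ := AlgHom.id R _) (shear_X_of_ne r) hp
  have shear_comp_shear (r s) (hs : shear r s = s) (hrs : r + s = 0) :
      (shear r).comp (shear s) = AlgHom.id R _ := by
    refine algHom_ext fun l => ?_
    obtain rfl | hl := eq_or_ne l k
    · simp [shear_X_self, hs, add_assoc, hrs]
    · simp [shear_X_of_ne _ l hl]
  exact ⟨AlgEquiv.ofAlgHom (shear p) (shear (-p))
    (shear_comp_shear _ _ (by rw [map_neg, shear_p]) (add_neg_cancel p))
    (shear_comp_shear _ _ (shear_p _) (neg_add_cancel p)),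
    shear_X_self p, shear_X_of_ne p⟩

namespace IsShear

theorem inv (hφ : IsShear k p φ) (hp : p ∈ supported R {k}ᶜ) : IsShear k (-p) φ⁻¹ where
  apply_X_self := (AlgEquiv.symm_apply_eq φ).2 <| by
    rw [map_add, map_neg, hφ.apply_X_self, hφ.apply_of_mem_supported hp, add_neg_cancel_right]
  apply_X_of_ne _ hl := (AlgEquiv.symm_apply_eq φ).2 (hφ.apply_X_of_ne hl).symm

theorem commutator (hjk : j ≠ k) (hf : f ∈ supported R {j, k}ᶜ) (hq : q ∈ supported R {j, k}ᶜ)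
    (hθ : IsShear j f θ) (hψ : IsShear k (q * X j) ψ) : IsShear k (q * f) ⁅θ, ψ⁆ := by
  have hj : supported R {j, k}ᶜ ≤ supported R {j}ᶜ := supported_mono (by simp)
  have hk : supported R {j, k}ᶜ ≤ supported R {k}ᶜ := supported_mono (by simp)
  have hθ' := hθ.inv (hj hf)
  have hψ' := hψ.inv (mul_mem (hk hq) (X_mem_supported_of_mem hjk))
  have hθq := hθ.apply_of_mem_supported (hj hq)
  have hθf := hθ.apply_of_mem_supported (hj hf)
  have hθq' := hθ'.apply_of_mem_supported (hj hq)
  have hψq := hψ.apply_of_mem_supported (hk hq)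
  have hψf := hψ.apply_of_mem_supported (hk hf)
  have hθk := hθ.apply_X_of_ne hjk.symm
  have hθk' := hθ'.apply_X_of_ne hjk.symm
  have hψj := hψ.apply_X_of_ne hjk
  have hψj' := hψ'.apply_X_of_ne hjk
  constructor
  · have hinv : θ⁻¹ (ψ⁻¹ (X k)) = X k - q * (X j - f) := by
      simp only [hψ'.apply_X_self, hθ'.apply_X_self, hθk', hθq', map_add, map_neg, map_mul,
        sub_eq_add_neg]
    have hψinv : ψ (X k - q * (X j - f)) = X k + q * f := by
      simp only [hψ.apply_X_self, hψj, hψq, hψf, map_sub, map_mul]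
      ring
    calc ⁅θ, ψ⁆ (X k) = θ (ψ (θ⁻¹ (ψ⁻¹ (X k)))) := rfl
      _ = θ (X k + q * f) := by rw [hinv, hψinv]
      _ = X k + q * f := by simp only [hθk, hθq, hθf, map_add, map_mul]
  · intro l hlk
    change θ (ψ (θ⁻¹ (ψ⁻¹ (X l)))) = X l
    obtain rfl | hlj := eq_or_ne l j
    · simp [hψj, hψj', hθ'.apply_X_self, hθ.apply_X_self, hψf, hθf]
    · simp [hψ.apply_X_of_ne hlk, hψ'.apply_X_of_ne hlk, hθ.apply_X_of_ne hlj,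
        hθ'.apply_X_of_ne hlj]

end IsShear

theorem contains_phi_m_b_general (hij : i ≠ j) (hik : i ≠ k) (hjk : j ≠ k)
    {H : Subgroup (MvPolynomial σ R ≃ₐ[R] MvPolynomial σ R)} (hlin : ∀ φ, IsLinear φ → φ ∈ H)
    (hψ : IsShear k (X i * X j) ψ) (hψH : ψ ∈ H) (b : R) {m : ℕ} (hm : 1 ≤ m)
    (hφ : IsShear k (C b * X i ^ m) φ) : φ ∈ H := by
  classical
  induction m, hm using Nat.le_induction generalizing φ with
  | base =>
    refine hlin φ (hφ.isLinear ?_)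
    rw [pow_one, ← smul_eq_C_mul]
    exact Submodule.smul_mem _ b (Submodule.subset_span (Set.mem_range_self i))
  | succ m _ ih =>
    obtain ⟨θ, hθ⟩ := exists_isShear (C_mul_X_pow_mem_supported (s := {k}ᶜ) hik b m)
    let τ := renameEquiv R (Equiv.swap j k)
    have hτ : τ ∈ H := hlin τ (isLinear_renameEquiv _)
    have hτθ : IsShear j (C b * X i ^ m) (τ * θ * τ⁻¹) := by
      simpa [Equiv.swap_apply_of_ne_of_ne hij hik] using hθ.conj_renameEquiv (Equiv.swap j k)
    have hτθH : τ * θ * τ⁻¹ ∈ H := mul_mem (mul_mem hτ (ih hθ)) (inv_mem hτ)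
    have hi : i ∈ ({j, k}ᶜ : Set σ) := by simp [hij, hik]
    have hcomm : IsShear k (X i * (C b * X i ^ m)) ⁅τ * θ * τ⁻¹, ψ⁆ :=
      .commutator hjk (C_mul_X_pow_mem_supported hi b m) (X_mem_supported_of_mem hi) hτθ hψ
    rw [mul_left_comm, ← pow_succ'] at hcomm
    rw [hφ.eq hcomm]
    exact H.commutator_le_self (Subgroup.commutator_mem_commutator hτθH hψH)

end CommRing

variable {K}

theorem isLinearAut_of_isLinear {φ : MvPolynomial (Fin 3) K ≃ₐ[K] MvPolynomial (Fin 3) K}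
    (hφ : IsLinear φ) : IsLinearAut K φ := by
  choose a ha using fun i => (Submodule.mem_span_range_iff_exists_fun K).1 (hφ i)
  exact ⟨a, fun i => by simp only [← ha, smul_eq_C_mul]⟩

theorem isShear_two_iff {p : MvPolynomial (Fin 3) K}
    {φ : MvPolynomial (Fin 3) K ≃ₐ[K] MvPolynomial (Fin 3) K} :
    IsShear 2 p φ ↔ φ (X 0) = X 0 ∧ φ (X 1) = X 1 ∧ φ (X 2) = X 2 + p := by
  refine ⟨fun h => ⟨h.apply_X_of_ne (by decide), h.apply_X_of_ne (by decide), h.apply_X_self⟩, ?_⟩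
  rintro ⟨h0, h1, h2⟩
  refine ⟨h2, fun l hl => ?_⟩
  fin_cases l
  exacts [h0, h1, absurd rfl hl]

variable (K)

/-- The subgroup generated by linear automorphisms and `ψ : z ↦ z + xy` contains every
automorphism `φ_m^b : x ↦ x, y ↦ y, z ↦ z + b·x^m` (`b ∈ K`, `m ≥ 1`). -/
theorem contains_phi_m_b (b : K) (m : ℕ) (hm : 1 ≤ m)
    (φ : MvPolynomial (Fin 3) K ≃ₐ[K] MvPolynomial (Fin 3) K)
    (hφ : φ (X 0) = X 0 ∧ φ (X 1) = X 1 ∧ φ (X 2) = X 2 + C b * X 0 ^ m) :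
    φ ∈ G K := by
  obtain ⟨ψ, hψ⟩ := exists_isShear (R := K) (k := (2 : Fin 3)) (p := X 0 * X 1)
    (mul_mem (X_mem_supported_of_mem (by decide)) (X_mem_supported_of_mem (by decide)))
  exact contains_phi_m_b_general (by decide) (by decide) (by decide)
    (fun _ hα => Subgroup.subset_closure (Or.inl (isLinearAut_of_isLinear hα)))
    hψ (Subgroup.subset_closure (Or.inr (isShear_two_iff.1 hψ))) b hm (isShear_two_iff.2 hφ)

end Stmt9
end

section
/- Let K be an infinite field with char(K) ≠ 2. Then the subgroup of Aut(K[x,y,z]) generated by all linear automorphisms together with the automorphism ψ : x ↦ x, y ↦ y, z ↦ z + xy contains, for every b ∈ K and every integer m ≥ 1, the automorphism α_m^b : x ↦ x, y ↦ y, z ↦ z + b·y·x^m. -/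
/-!
Identify a shear `X k ↦ X k + f`, with `f` free of `X k`, with the polynomial `f`. For a group `H`
of automorphisms, the polynomials whose shears lie in `H` form an additive group, and conjugating by
a shear of another variable substitutes `X j ↦ X j + g` in them. Substituting `y ↦ y + c * x ^ n` in
`x * y` and subtracting `x * y` therefore turns `c * x ^ n` into `c * x ^ (n + 1)`. Swapping `x` and
`y` in `x ^ 2` gives `y ^ 2`, and
`(y + c * x ^ m) ^ 2 - y ^ 2 - c ^ 2 * x ^ (2 * m) = 2 * c * y * x ^ m`.
-/

open MvPolynomial

namespace Stmt11

variable (K : Type*) [Field K]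

/-- Linear automorphisms of `K[x,y,z]`: each variable is sent to a linear form. -/
def IsLinearAut (φ : MvPolynomial (Fin 3) K ≃ₐ[K] MvPolynomial (Fin 3) K) : Prop :=
  ∃ a : Fin 3 → Fin 3 → K, ∀ i, φ (X i) = ∑ j, C (a i j) * X j

/-- The automorphism `ψ : x ↦ x, y ↦ y, z ↦ z + xy`. -/
def IsPsi (φ : MvPolynomial (Fin 3) K ≃ₐ[K] MvPolynomial (Fin 3) K) : Prop :=
  φ (X 0) = X 0 ∧ φ (X 1) = X 1 ∧ φ (X 2) = X 2 + X 0 * X 1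

/-- The subgroup of `Aut(K[x,y,z])` generated by all linear automorphisms and `ψ`. -/
noncomputable def G : Subgroup (MvPolynomial (Fin 3) K ≃ₐ[K] MvPolynomial (Fin 3) K) :=
  Subgroup.closure {φ | IsLinearAut K φ ∨ IsPsi K φ}

section Supported

variable {σ R : Type*} [CommRing R] {i k : σ}

lemma X_mem_supported_compl (h : i ≠ k) : (X i : MvPolynomial σ R) ∈ supported R {k}ᶜ :=
  Algebra.subset_adjoin ⟨i, h, rfl⟩

lemma C_mul_X_pow_mem_supported_compl (hik : i ≠ k) (c : R) (n : ℕ) :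
    C c * X i ^ n ∈ supported R {k}ᶜ :=
  mul_mem (algebraMap_mem _ c) (pow_mem (X_mem_supported_compl hik) n)

lemma map_mem_of_mem_supported {A F : Type*} [CommRing A] [Algebra R A]
    [FunLike F (MvPolynomial σ R) A] [AlgHomClass F R (MvPolynomial σ R) A] {s : Set σ}
    {S : Subalgebra R A} {f : MvPolynomial σ R} (τ : F) (hτ : ∀ l ∈ s, τ (X l) ∈ S)
    (hf : f ∈ supported R s) : τ f ∈ S :=
  (Algebra.adjoin_le (Set.image_subset_iff.2 hτ) :
    supported R s ≤ S.comap (AlgHomClass.toAlgHom τ)) hf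

end Supported

section Shear

variable {σ R : Type*} [DecidableEq σ] [CommRing R] {i j k : σ} {f g : MvPolynomial σ R}

/-- The substitution `X k ↦ X k + f`, which fixes the other variables. It is an automorphism when
`f` does not involve `X k`; see `shear`. -/
noncomputable def shearHom (k : σ) (f : MvPolynomial σ R) :
    MvPolynomial σ R →ₐ[R] MvPolynomial σ R :=
  aeval (Function.update X k (X k + f))

lemma shearHom_X_self (k : σ) (f : MvPolynomial σ R) : shearHom k f (X k) = X k + f := by
  simp [shearHom]

lemma shearHom_X_of_ne (h : j ≠ k) (f : MvPolynomial σ R) : shearHom k f (X j) = X j := by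
  simp [shearHom, h]

lemma eq_shearHom {φ : MvPolynomial σ R →ₐ[R] MvPolynomial σ R} (hk : φ (X k) = X k + f)
    (hφ : ∀ l ≠ k, φ (X l) = X l) : φ = shearHom k f := by
  ext1 l
  obtain rfl | hl := eq_or_ne l k
  · rw [hk, shearHom_X_self]
  · rw [hφ l hl, shearHom_X_of_ne hl]

lemma shearHom_apply_of_mem_supported (hg : g ∈ supported R {k}ᶜ) : shearHom k f g = g :=
  map_mem_of_mem_supported (S := AlgHom.equalizer (shearHom k f) (.id R _))
    (AlgHom.id R _)
    (fun _ hl ↦ shearHom_X_of_ne hl f) hg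

lemma shearHom_zero (k : σ) : shearHom k (0 : MvPolynomial σ R) = .id R _ :=
  (eq_shearHom (by simp) (by simp)).symm

lemma shearHom_comp (hg : g ∈ supported R {k}ᶜ) :
    (shearHom k f).comp (shearHom k g) = shearHom k (f + g) := by
  refine eq_shearHom ?_ fun l hl ↦ ?_
  · simp [shearHom_X_self, shearHom_apply_of_mem_supported hg, add_assoc]
  · simp [shearHom_X_of_ne hl]

/-- The elementary automorphism `X k ↦ X k + f`, for `f` not involving `X k`. -/
noncomputable def shear (k : σ) (f : MvPolynomial σ R) (hf : f ∈ supported R {k}ᶜ) :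
    MvPolynomial σ R ≃ₐ[R] MvPolynomial σ R :=
  .ofAlgHom (shearHom k f) (shearHom k (-f))
    (by rw [shearHom_comp (neg_mem hf), add_neg_cancel, shearHom_zero])
    (by rw [shearHom_comp hf, neg_add_cancel, shearHom_zero])

lemma shear_apply (hf : f ∈ supported R {k}ᶜ) (p : MvPolynomial σ R) :
    shear k f hf p = shearHom k f p :=
  rfl

lemma eq_shear {φ : MvPolynomial σ R ≃ₐ[R] MvPolynomial σ R} (hf : f ∈ supported R {k}ᶜ)
    (hk : φ (X k) = X k + f) (hφ : ∀ l ≠ k, φ (X l) = X l) : φ = shear k f hf :=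
  AlgEquiv.coe_toAlgHom_injective (eq_shearHom hk hφ)

lemma shear_mul (hf : f ∈ supported R {k}ᶜ) (hg : g ∈ supported R {k}ᶜ) :
    shear k f hf * shear k g hg = shear k (f + g) (add_mem hf hg) :=
  AlgEquiv.coe_toAlgHom_injective (shearHom_comp hg)

lemma shear_zero (k : σ) : shear k (0 : MvPolynomial σ R) (zero_mem _) = 1 :=
  AlgEquiv.coe_toAlgHom_injective (shearHom_zero k)

lemma inv_shear (hf : f ∈ supported R {k}ᶜ) : (shear k f hf)⁻¹ = shear k (-f) (neg_mem hf) :=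
  AlgEquiv.ext fun _ ↦ rfl

lemma conj_shear {τ : MvPolynomial σ R ≃ₐ[R] MvPolynomial σ R} (hj : τ (X j) = X k)
    (hτ : ∀ l ≠ j, τ (X l) ∈ supported R {k}ᶜ) (hf : f ∈ supported R {j}ᶜ) :
    τ * shear j f hf * τ⁻¹ = shear k (τ f) (map_mem_of_mem_supported τ hτ hf) := by
  rw [mul_inv_eq_iff_eq_mul]
  apply AlgEquiv.coe_toAlgHom_injective
  ext1 l
  obtain rfl | hl := eq_or_ne l j
  · simp [shear_apply, shearHom_X_self, hj]
  · simp [shear_apply, shearHom_X_of_ne hl, shearHom_apply_of_mem_supported (hτ l hl)]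

/-- The additive group of all `f`, not involving `X k`, such that `X k ↦ X k + f` lies in `H`. -/
noncomputable def shears (H : Subgroup (MvPolynomial σ R ≃ₐ[R] MvPolynomial σ R)) (k : σ) :
    AddSubgroup (MvPolynomial σ R) where
  carrier := {f | ∃ hf : f ∈ supported R {k}ᶜ, shear k f hf ∈ H}
  zero_mem' := ⟨zero_mem _, by rw [shear_zero]; exact one_mem H⟩
  add_mem' := fun ⟨hf, hfH⟩ ⟨hg, hgH⟩ ↦ ⟨add_mem hf hg, by
    rw [← shear_mul hf hg]; exact mul_mem hfH hgH⟩
  neg_mem' := fun ⟨hf, hfH⟩ ↦ ⟨neg_mem hf, by rw [← inv_shear hf]; exact inv_mem hfH⟩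

variable {H : Subgroup (MvPolynomial σ R ≃ₐ[R] MvPolynomial σ R)}

lemma mem_of_mem_shears {φ : MvPolynomial σ R ≃ₐ[R] MvPolynomial σ R} (hf : f ∈ shears H k)
    (hk : φ (X k) = X k + f) (hφ : ∀ l ≠ k, φ (X l) = X l) : φ ∈ H := by
  obtain ⟨hf, hfH⟩ := hf
  rwa [eq_shear hf hk hφ]

lemma mem_shears_of_forall (hf : f ∈ supported R {k}ᶜ)
    (h : ∀ φ : MvPolynomial σ R ≃ₐ[R] MvPolynomial σ R,
      φ (X k) = X k + f → (∀ l ≠ k, φ (X l) = X l) → φ ∈ H) : f ∈ shears H k :=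
  ⟨hf, h _ (shearHom_X_self k f) fun _ hl ↦ shearHom_X_of_ne hl f⟩

lemma map_mem_shears {τ : MvPolynomial σ R ≃ₐ[R] MvPolynomial σ R} (hτH : τ ∈ H)
    (hj : τ (X j) = X k) (hτ : ∀ l ≠ j, τ (X l) ∈ supported R {k}ᶜ) (hf : f ∈ shears H j) :
    τ f ∈ shears H k := by
  obtain ⟨hf, hfH⟩ := hf
  refine ⟨map_mem_of_mem_supported τ hτ hf, ?_⟩
  rw [← conj_shear hj hτ hf]
  exact mul_mem (mul_mem hτH hfH) (inv_mem hτH)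

lemma rename_mem_shears {e : Equiv.Perm σ} (he : renameEquiv R e ∈ H) (hf : f ∈ shears H k) :
    rename e f ∈ shears H (e k) :=
  map_mem_shears he (rename_X e k)
    (fun l hl ↦ by simpa using X_mem_supported_compl (e.injective.ne hl)) hf

lemma shearHom_mem_shears (hjk : j ≠ k) (hg : g ∈ shears H j) (hgk : g ∈ supported R {k}ᶜ)
    (hf : f ∈ shears H k) : shearHom j g f ∈ shears H k := by
  obtain ⟨hgj, hgH⟩ := hg
  refine map_mem_shears hgH (shearHom_X_of_ne hjk.symm g) (fun l hl ↦ ?_) hf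
  rw [shear_apply]
  obtain rfl | hlj := eq_or_ne l j
  · rw [shearHom_X_self]
    exact add_mem (X_mem_supported_compl hl) hgk
  · rw [shearHom_X_of_ne hlj]
    exact X_mem_supported_compl hl

lemma X_mul_mem_shears (hij : i ≠ j) (hjk : j ≠ k) (hX : X i * X j ∈ shears H k)
    (hg : g ∈ shears H j) (hgk : g ∈ supported R {k}ᶜ) : X i * g ∈ shears H k := by
  have hsubst := sub_mem (shearHom_mem_shears hjk hg hgk hX) hX
  rwa [map_mul, shearHom_X_of_ne hij, shearHom_X_self, mul_add, add_sub_cancel_left] at hsubst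

lemma two_mul_X_mul_mem_shears (hjk : j ≠ k) (hX : X j ^ 2 ∈ shears H k) (hg : g ∈ shears H j)
    (hgk : g ^ 2 ∈ shears H k) (hgs : g ∈ supported R {k}ᶜ) : 2 * X j * g ∈ shears H k := by
  have hpolar := sub_mem (sub_mem (shearHom_mem_shears hjk hg hgs hX) hX) hgk
  rw [map_pow, shearHom_X_self] at hpolar
  convert hpolar using 1
  ring

lemma C_mul_X_pow_mem_shears_of_ne (hperm : ∀ e : Equiv.Perm σ, renameEquiv R e ∈ H)
    (hij : i ≠ j) (hik : i ≠ k) {c : R} {n : ℕ} (h : C c * X i ^ n ∈ shears H k) :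
    C c * X i ^ n ∈ shears H j := by
  simpa [Equiv.swap_apply_of_ne_of_ne hik hij] using rename_mem_shears (hperm (Equiv.swap k j)) h

lemma C_mul_X_pow_mem_shears (hperm : ∀ e : Equiv.Perm σ, renameEquiv R e ∈ H)
    (hij : i ≠ j) (hik : i ≠ k) (hjk : j ≠ k) {c : R} (hlin : C c * X i ∈ shears H k)
    (hX : X i * X j ∈ shears H k) (n : ℕ) : C c * X i ^ (n + 1) ∈ shears H k := by
  induction n with
  | zero => simpa using hlin
  | succ n ih =>
    have hmul := X_mul_mem_shears hij hjk hX (C_mul_X_pow_mem_shears_of_ne hperm hij hik ih)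
      (C_mul_X_pow_mem_supported_compl hik c (n + 1))
    rwa [mul_left_comm, ← pow_succ'] at hmul

end Shear

section Linear

variable {σ R : Type*} [Fintype σ] [CommRing R] {i j k : σ}

/-- Linear automorphisms of a polynomial ring in finitely many variables over a commutative ring;
`IsLinearAut` is the case of three variables over a field. -/
def IsLinearSubst (φ : MvPolynomial σ R ≃ₐ[R] MvPolynomial σ R) : Prop :=
  ∃ a : Matrix σ σ R, ∀ i, φ (X i) = ∑ j, C (a i j) * X j

lemma isLinearSubst_renameEquiv (e : Equiv.Perm σ) : IsLinearSubst (renameEquiv R e) := by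
  classical
  exact ⟨fun i ↦ Pi.single (e i) 1, fun i ↦ by simp [Pi.single_apply, apply_ite C]⟩

variable [DecidableEq σ]

lemma isLinearSubst_shear (hik : i ≠ k) (c : R) (h : C c * X i ∈ supported R {k}ᶜ) :
    IsLinearSubst (shear k (C c * X i) h) := by
  refine ⟨Matrix.transvection k i c, fun l ↦ ?_⟩
  rw [shear_apply]
  obtain rfl | hl := eq_or_ne l k
  · simp [shearHom_X_self, Matrix.transvection, Matrix.one_apply, Matrix.single_apply, add_mul,
      Finset.sum_add_distrib, apply_ite C]
  · simp [shearHom_X_of_ne hl, Matrix.transvection, Matrix.one_apply, hl.symm, apply_ite C]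

variable {H : Subgroup (MvPolynomial σ R ≃ₐ[R] MvPolynomial σ R)}

lemma C_mul_X_mem_shears (hlin : ∀ φ, IsLinearSubst φ → φ ∈ H) (hik : i ≠ k) (c : R) :
    C c * X i ∈ shears H k :=
  have hs : C c * X i ∈ supported R {k}ᶜ := by
    simpa using C_mul_X_pow_mem_supported_compl hik c 1
  ⟨hs, hlin _ (isLinearSubst_shear hik c hs)⟩

lemma X_sq_mem_shears (hlin : ∀ φ, IsLinearSubst φ → φ ∈ H) (hij : i ≠ j) (hik : i ≠ k)
    (hjk : j ≠ k) (hX : X i * X j ∈ shears H k) : X j ^ 2 ∈ shears H k := by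
  have hperm (e : Equiv.Perm σ) : renameEquiv R e ∈ H := hlin _ (isLinearSubst_renameEquiv e)
  have hsq := C_mul_X_pow_mem_shears hperm hij hik hjk (C_mul_X_mem_shears hlin hik 1) hX 1
  simpa [Equiv.swap_apply_of_ne_of_ne hik.symm hjk.symm]
    using rename_mem_shears (hperm (Equiv.swap i j)) hsq

theorem C_mul_X_mul_X_pow_mem_shears (hlin : ∀ φ, IsLinearSubst φ → φ ∈ H) (hij : i ≠ j)
    (hik : i ≠ k) (hjk : j ≠ k) (hX : X i * X j ∈ shears H k) {b : R} (hb : 2 ∣ b) (m : ℕ) :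
    C b * X j * X i ^ m ∈ shears H k := by
  obtain ⟨c, rfl⟩ := hb
  cases m with
  | zero => simpa using C_mul_X_mem_shears hlin hjk (2 * c)
  | succ n =>
    have hperm (e : Equiv.Perm σ) : renameEquiv R e ∈ H := hlin _ (isLinearSubst_renameEquiv e)
    have hpow (a : R) (r : ℕ) : C a * X i ^ (r + 1) ∈ shears H k :=
      C_mul_X_pow_mem_shears hperm hij hik hjk (C_mul_X_mem_shears hlin hik a) hX r
    have hsq : (C c * X i ^ (n + 1)) ^ 2 ∈ shears H k := by
      convert hpow (c ^ 2) (2 * n + 1) using 1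
      rw [C_pow]
      ring
    have hpolar := two_mul_X_mul_mem_shears hjk (X_sq_mem_shears hlin hij hik hjk hX)
      (C_mul_X_pow_mem_shears_of_ne hperm hij hik (hpow c n)) hsq
      (C_mul_X_pow_mem_supported_compl hik c (n + 1))
    convert hpolar using 1
    rw [C_mul, map_ofNat]
    ring

end Linear

theorem contains_alpha_m_b_general {R : Type*} [CommRing R]
    {H : Subgroup (MvPolynomial (Fin 3) R ≃ₐ[R] MvPolynomial (Fin 3) R)}
    (hlin : ∀ φ, IsLinearSubst φ → φ ∈ H)
    (hpsi : ∀ φ : MvPolynomial (Fin 3) R ≃ₐ[R] MvPolynomial (Fin 3) R,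
      φ (X 0) = X 0 ∧ φ (X 1) = X 1 ∧ φ (X 2) = X 2 + X 0 * X 1 → φ ∈ H)
    {b : R} (hb : 2 ∣ b) (m : ℕ) {φ : MvPolynomial (Fin 3) R ≃ₐ[R] MvPolynomial (Fin 3) R}
    (hφ : φ (X 0) = X 0 ∧ φ (X 1) = X 1 ∧ φ (X 2) = X 2 + C b * X 1 * X 0 ^ m) :
    φ ∈ H := by
  have hX : X 0 * X 1 ∈ shears H 2 :=
    mem_shears_of_forall
      (mul_mem (X_mem_supported_compl (by decide)) (X_mem_supported_compl (by decide)))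
      fun ψ h2 hψ ↦ hpsi ψ ⟨hψ 0 (by decide), hψ 1 (by decide), h2⟩
  have hmem : C b * X 1 * X 0 ^ m ∈ shears H 2 :=
    C_mul_X_mul_X_pow_mem_shears hlin (by decide) (by decide) (by decide) hX hb m
  obtain ⟨h0, h1, h2⟩ := hφ
  exact mem_of_mem_shears hmem h2 (by simp [Fin.forall_fin_succ, h0, h1])

/-- For `K` infinite with `char K ≠ 2`, the subgroup generated by linear automorphisms
and `ψ : z ↦ z + xy` contains every automorphism
`α_m^b : x ↦ x, y ↦ y, z ↦ z + b·y·x^m` (`b ∈ K`, `m ≥ 1`). -/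
theorem contains_alpha_m_b [Infinite K] (hchar : (2 : K) ≠ 0)
    (b : K) (m : ℕ) (hm : 1 ≤ m)
    (φ : MvPolynomial (Fin 3) K ≃ₐ[K] MvPolynomial (Fin 3) K)
    (hφ : φ (X 0) = X 0 ∧ φ (X 1) = X 1 ∧
          φ (X 2) = X 2 + C b * X 1 * X 0 ^ m) :
    φ ∈ G K :=
  contains_alpha_m_b_general (fun _ h ↦ Subgroup.subset_closure (.inl h))
    (fun _ h ↦ Subgroup.subset_closure (.inr h)) (IsUnit.mk0 _ hchar).dvd m hφ

end Stmt11
end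

section
/- Let K be a field and let G be a subgroup of the group of K-algebra automorphisms of the free associative algebra K⟨x,y,z,t⟩ that contains all linear automorphisms and the automorphism x ↦ x, y ↦ y, z ↦ z + xy, t ↦ t. Then for every element P ∈ K⟨x,y⟩ (a noncommutative polynomial in x and y only) with zero constant term, G contains the automorphism x ↦ x, y ↦ y, z ↦ z + P(x,y), t ↦ t. -/
/-!
Let `S` be the set of polynomials `Q` free of `z` such that `G` contains `z ↦ z + Q`; it is an
additive group. Conjugating `z ↦ z + xy` by permutations of the variables puts `x_i t` in `S` for
every variable `x_i` other than `z` and `t`. If `Q ∈ S` is also free of `t`, conjugating by the swap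
of `z` and `t` puts `t ↦ t + Q` in `G`, and conjugating `z ↦ z + x_i t` by the latter gives
`z ↦ z + x_i t + x_i Q`; hence `x_i Q ∈ S`. Starting from the linear terms `c x_i`, left
multiplications by variables reach every monomial `c x_{i₁} ⋯ x_{iₙ}` with `n ≥ 1` in the variables
other than `z` and `t`.
-/

namespace Stmt14

variable (K : Type*) [Field K]

/-- The augmentation homomorphism of `K⟨x,y,z,t⟩`, sending every generator to `0`. -/
noncomputable def aug : FreeAlgebra K (Fin 4) →ₐ[K] K :=
  FreeAlgebra.lift K (fun _ : Fin 4 => (0 : K))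

/-- Linear automorphisms of `K⟨x,y,z,t⟩`: each generator is sent to a linear form. -/
def IsLinearAut (φ : FreeAlgebra K (Fin 4) ≃ₐ[K] FreeAlgebra K (Fin 4)) : Prop :=
  ∃ a : Fin 4 → Fin 4 → K, ∀ i, φ (FreeAlgebra.ι K i) = ∑ j, a i j • FreeAlgebra.ι K j

lemma exists_perm_fixing {X : Type*} {x y z x' y' : X} (hxy : x ≠ y) (hxz : x ≠ z) (hyz : y ≠ z)
    (hxy' : x' ≠ y') (hxz' : x' ≠ z) (hyz' : y' ≠ z) :
    ∃ σ : Equiv.Perm X, σ x = x' ∧ σ y = y' ∧ σ z = z := by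
  obtain ⟨σ, hσ⟩ := Equiv.Perm.exists_extending_pair ![x, y, z] ![x', y', z]
    (by simp [Function.Injective, Fin.forall_fin_succ, hxy, hxz, hyz, hxy.symm, hxz.symm, hyz.symm])
    (by simp [Function.Injective, Fin.forall_fin_succ, hxy', hxz', hyz', hxy'.symm, hxz'.symm,
      hyz'.symm])
  exact ⟨σ, hσ 0, hσ 1, hσ 2⟩

section Semiring

open FreeAlgebra

variable {R X : Type*} [CommSemiring R]

lemma algEquiv_ext {A : Type*} [Semiring A] [Algebra R A] {e₁ e₂ : FreeAlgebra R X ≃ₐ[R] A}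
    (h : ∀ i, e₁ (ι R i) = e₂ (ι R i)) : e₁ = e₂ :=
  AlgEquiv.coe_toAlgHom_injective <| FreeAlgebra.hom_ext <| funext h

/-- The polynomials in the variables indexed by `s`; the noncommutative analogue of
`MvPolynomial.supported`. -/
def supported (R : Type*) [CommSemiring R] (s : Set X) : Subalgebra R (FreeAlgebra R X) :=
  Algebra.adjoin R (ι R '' s)

lemma ι_mem_supported {s : Set X} {i : X} (hi : i ∈ s) : ι R i ∈ supported R s :=
  Algebra.subset_adjoin (Set.mem_image_of_mem _ hi)

lemma supported_mono {s t : Set X} (h : s ⊆ t) : supported R s ≤ supported R t :=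
  Algebra.adjoin_mono (Set.image_mono h)

lemma map_mem_of_mem_supported {A : Type*} [Semiring A] [Algebra R A] {f : FreeAlgebra R X →ₐ[R] A}
    {s : Set X} {B : Subalgebra R A} (hf : ∀ i ∈ s, f (ι R i) ∈ B) {P : FreeAlgebra R X}
    (hP : P ∈ supported R s) : f P ∈ B :=
  (Algebra.adjoin_le (Set.forall_mem_image.2 hf) : supported R s ≤ B.comap f) hP

lemma map_eq_self_of_mem_supported {f : FreeAlgebra R X →ₐ[R] FreeAlgebra R X} {s : Set X}
    (hf : ∀ i ∈ s, f (ι R i) = ι R i) {P : FreeAlgebra R X} (hP : P ∈ supported R s) : f P = P :=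
  AlgHom.adjoin_le_equalizer f (AlgHom.id R _) (Set.forall_mem_image.2 hf) hP

lemma mem_of_algebraMapInv_eq_zero {S : Type*} [SetLike S (FreeAlgebra R X)]
    [AddSubmonoidClass S (FreeAlgebra R X)] {H : S} {s : Set X}
    (smul_ι_mem : ∀ i ∈ s, ∀ c : R, c • ι R i ∈ H)
    (ι_mul_mem : ∀ i ∈ s, ∀ Q ∈ H, ι R i * Q ∈ H) {P : FreeAlgebra R X}
    (hP : P ∈ supported R s) (hP0 : algebraMapInv P = 0) : P ∈ H := by
  suffices h : ∀ c : R, ∃ Q ∈ H, c • P = algebraMap R _ (c * algebraMapInv P) + Q by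
    obtain ⟨Q, hQ, hPQ⟩ := h 1
    rw [one_smul, one_mul, hP0, map_zero, zero_add] at hPQ
    exact hPQ ▸ hQ
  clear hP0
  rw [supported, ← Subalgebra.mem_toSubmodule, Algebra.adjoin_eq_span] at hP
  induction hP using Submodule.span_induction with
  | zero => exact fun c => ⟨0, zero_mem H, by simp⟩
  | add P P' _ _ ihP ihP' =>
    intro c
    obtain ⟨Q, hQ, hPQ⟩ := ihP c
    obtain ⟨Q', hQ', hPQ'⟩ := ihP' c
    refine ⟨Q + Q', add_mem hQ hQ', ?_⟩
    rw [smul_add, hPQ, hPQ', map_add algebraMapInv, mul_add, map_add, add_add_add_comm]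
  | smul d P _ ih =>
    intro c
    obtain ⟨Q, hQ, hPQ⟩ := ih (c * d)
    exact ⟨Q, hQ, by rw [smul_smul, hPQ, map_smul, smul_eq_mul, mul_assoc]⟩
  | mem m hm =>
    induction hm using Submonoid.closure_induction_left with
    | one => exact fun c => ⟨0, zero_mem H, by simp [Algebra.algebraMap_eq_smul_one]⟩
    | mul_left _ hx m _ ih =>
      obtain ⟨i, hi, rfl⟩ := hx
      intro c
      obtain ⟨Q, hQ, hmQ⟩ := ih c
      refine ⟨(c * algebraMapInv m) • ι R i + ι R i * Q,
        add_mem (smul_ι_mem i hi _) (ι_mul_mem i hi Q hQ), ?_⟩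
      have hconst : algebraMapInv (ι R i * m) = 0 := by simp [algebraMapInv]
      rw [hconst, mul_zero, map_zero, zero_add, ← mul_smul_comm, hmQ, mul_add, Algebra.smul_def,
        Algebra.commutes]

/-- The automorphism permuting the variables by `σ`. -/
noncomputable def permAut (R : Type*) [CommSemiring R] (σ : Equiv.Perm X) :
    FreeAlgebra R X ≃ₐ[R] FreeAlgebra R X :=
  AlgEquiv.ofAlgHom (lift R (ι R ∘ σ)) (lift R (ι R ∘ σ.symm)) (by ext; simp) (by ext; simp)

@[simp]
lemma permAut_ι (σ : Equiv.Perm X) (i : X) : permAut R σ (ι R i) = ι R (σ i) := by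
  simp [permAut]

variable [DecidableEq X]

/-- The endomorphism `x_i ↦ x_i + P` fixing the other variables. It is invertible when `P` does not
involve `x_i`, see `elementaryAut`. -/
noncomputable def elementaryHom (i : X) (P : FreeAlgebra R X) :
    FreeAlgebra R X →ₐ[R] FreeAlgebra R X :=
  lift R (Function.update (ι R) i (ι R i + P))

@[simp]
lemma elementaryHom_ι_self (i : X) (P : FreeAlgebra R X) :
    elementaryHom i P (ι R i) = ι R i + P := by
  simp [elementaryHom]

lemma elementaryHom_ι_of_ne {i j : X} (h : j ≠ i) (P : FreeAlgebra R X) :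
    elementaryHom i P (ι R j) = ι R j := by
  simp [elementaryHom, h]

lemma elementaryHom_zero (i : X) : elementaryHom i (0 : FreeAlgebra R X) = AlgHom.id R _ := by
  ext j
  simp [elementaryHom]

lemma elementaryHom_comp (i : X) (P : FreeAlgebra R X) {Q : FreeAlgebra R X}
    (hQ : Q ∈ supported R {i}ᶜ) :
    (elementaryHom i P).comp (elementaryHom i Q) = elementaryHom i (P + Q) := by
  have hPQ : elementaryHom i P Q = Q :=
    map_eq_self_of_mem_supported (fun _ hj => elementaryHom_ι_of_ne hj P) hQ
  ext j
  obtain rfl | hj := eq_or_ne j i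
  · simp [hPQ, add_assoc]
  · simp [elementaryHom_ι_of_ne hj]

end Semiring

section Ring

open FreeAlgebra

variable {R X : Type*} [CommRing R] [DecidableEq X]

/-- The elementary automorphism `x_i ↦ x_i + P`, where `P` does not involve `x_i`. -/
noncomputable def elementaryAut (i : X) (P : supported R {i}ᶜ) :
    FreeAlgebra R X ≃ₐ[R] FreeAlgebra R X :=
  AlgEquiv.ofAlgHom (elementaryHom i P) (elementaryHom i (-P))
    (by rw [elementaryHom_comp i _ (neg_mem P.2), add_neg_cancel, elementaryHom_zero])
    (by rw [elementaryHom_comp i _ P.2, neg_add_cancel, elementaryHom_zero])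

@[simp]
lemma elementaryAut_apply (i : X) (P : supported R {i}ᶜ) (Q : FreeAlgebra R X) :
    elementaryAut i P Q = elementaryHom i P Q :=
  rfl

lemma eq_elementaryAut_iff {i : X} {P : supported R {i}ᶜ}
    {φ : FreeAlgebra R X ≃ₐ[R] FreeAlgebra R X} :
    φ = elementaryAut i P ↔ φ (ι R i) = ι R i + P ∧ ∀ j ≠ i, φ (ι R j) = ι R j := by
  refine ⟨?_, fun ⟨hi, hne⟩ => algEquiv_ext fun j => ?_⟩
  · rintro rfl
    exact ⟨elementaryHom_ι_self i _, fun j hj => elementaryHom_ι_of_ne hj _⟩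
  · obtain rfl | hj := eq_or_ne j i
    · simp [hi]
    · simp [hne j hj, elementaryHom_ι_of_ne hj]

lemma elementaryAut_zero (i : X) : elementaryAut i (0 : supported R {i}ᶜ) = 1 :=
  AlgEquiv.coe_toAlgHom_injective (elementaryHom_zero i)

lemma elementaryAut_add (i : X) (P Q : supported R {i}ᶜ) :
    elementaryAut i (P + Q) = elementaryAut i P * elementaryAut i Q :=
  AlgEquiv.coe_toAlgHom_injective (elementaryHom_comp i _ Q.2).symm

lemma elementaryAut_neg (i : X) (P : supported R {i}ᶜ) :
    elementaryAut i (-P) = (elementaryAut i P)⁻¹ :=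
  eq_inv_of_mul_eq_one_left (by rw [← elementaryAut_add, neg_add_cancel, elementaryAut_zero])

lemma mul_elementaryAut_mul_inv {φ : FreeAlgebra R X ≃ₐ[R] FreeAlgebra R X} {i j : X}
    (hi : φ (ι R i) = ι R j) (hne : ∀ k ≠ i, φ (ι R k) ∈ supported R {j}ᶜ)
    (P : supported R {i}ᶜ) (Q : supported R {j}ᶜ) (hPQ : φ P = Q) :
    φ * elementaryAut i P * φ⁻¹ = elementaryAut j Q := by
  rw [mul_inv_eq_iff_eq_mul]
  refine algEquiv_ext fun k => ?_
  obtain rfl | hk := eq_or_ne k i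
  · simp [hi, hPQ]
  · have hfix : elementaryHom j (Q : FreeAlgebra R X) (φ (ι R k)) = φ (ι R k) :=
      map_eq_self_of_mem_supported (fun _ hl => elementaryHom_ι_of_ne hl _) (hne k hk)
    simp [elementaryHom_ι_of_ne hk, hfix]

variable {G : Subgroup (FreeAlgebra R X ≃ₐ[R] FreeAlgebra R X)}

/-- The polynomials `P` not involving `x_i` such that `G` contains `x_i ↦ x_i + P`. -/
def elementaryShifts (G : Subgroup (FreeAlgebra R X ≃ₐ[R] FreeAlgebra R X)) (i : X) :
    AddSubgroup (FreeAlgebra R X) where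
  carrier := {P | ∃ hP : P ∈ supported R {i}ᶜ, elementaryAut i ⟨P, hP⟩ ∈ G}
  zero_mem' := ⟨zero_mem _, (elementaryAut_zero (R := R) i).symm ▸ one_mem G⟩
  add_mem' := fun ⟨hP, hPG⟩ ⟨hQ, hQG⟩ =>
    ⟨add_mem hP hQ, elementaryAut_add i ⟨_, hP⟩ ⟨_, hQ⟩ ▸ mul_mem hPG hQG⟩
  neg_mem' := fun ⟨hP, hPG⟩ => ⟨neg_mem hP, elementaryAut_neg i ⟨_, hP⟩ ▸ inv_mem hPG⟩

lemma mem_elementaryShifts_iff {i : X} {P : FreeAlgebra R X} :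
    P ∈ elementaryShifts G i ↔ P ∈ supported R {i}ᶜ ∧
      ∀ φ : FreeAlgebra R X ≃ₐ[R] FreeAlgebra R X,
        φ (ι R i) = ι R i + P → (∀ j ≠ i, φ (ι R j) = ι R j) → φ ∈ G := by
  constructor
  · rintro ⟨hP, hPG⟩
    exact ⟨hP, fun φ hi hne => (eq_elementaryAut_iff (P := ⟨P, hP⟩)).2 ⟨hi, hne⟩ ▸ hPG⟩
  · rintro ⟨hP, hG⟩
    obtain ⟨hi, hne⟩ := (eq_elementaryAut_iff (P := ⟨P, hP⟩)).1 rfl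
    exact ⟨hP, hG _ hi hne⟩

lemma apply_mem_elementaryShifts {φ : FreeAlgebra R X ≃ₐ[R] FreeAlgebra R X} (hφ : φ ∈ G)
    {i j : X} (hi : φ (ι R i) = ι R j) (hne : ∀ k ≠ i, φ (ι R k) ∈ supported R {j}ᶜ)
    {P : FreeAlgebra R X} (hP : P ∈ elementaryShifts G i) : φ P ∈ elementaryShifts G j := by
  obtain ⟨hPi, hPG⟩ := hP
  have hPj : φ P ∈ supported R {j}ᶜ := map_mem_of_mem_supported (f := φ.toAlgHom) hne hPi
  refine ⟨hPj, ?_⟩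
  rw [← mul_elementaryAut_mul_inv hi hne ⟨P, hPi⟩ ⟨φ P, hPj⟩ rfl]
  exact mul_mem (mul_mem hφ hPG) (inv_mem hφ)

lemma permAut_apply_mem_elementaryShifts {σ : Equiv.Perm X} (hσ : permAut R σ ∈ G) {i : X}
    {P : FreeAlgebra R X} (hP : P ∈ elementaryShifts G i) :
    permAut R σ P ∈ elementaryShifts G (σ i) :=
  apply_mem_elementaryShifts hσ (permAut_ι σ i)
    (fun k hk => permAut_ι (R := R) σ k ▸ ι_mem_supported (σ.injective.ne hk)) hP

lemma mul_mem_elementaryShifts {z t : X} (hzt : z ≠ t) {w Q : FreeAlgebra R X}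
    (hw : w ∈ supported R {t}ᶜ) (hwt : w * ι R t ∈ elementaryShifts G z)
    (hQz : Q ∈ supported R {z}ᶜ) (hQ : Q ∈ elementaryShifts G t) :
    w * Q ∈ elementaryShifts G z := by
  obtain ⟨hQt, hQG⟩ := hQ
  have hne : ∀ k ≠ z, elementaryAut t ⟨Q, hQt⟩ (ι R k) ∈ supported R {z}ᶜ := by
    intro k hk
    obtain rfl | hkt := eq_or_ne k t
    · simpa using add_mem (ι_mem_supported hk) hQz
    · simpa [elementaryHom_ι_of_ne hkt] using ι_mem_supported (R := R) hk
  have himage : elementaryAut t ⟨Q, hQt⟩ (w * ι R t) = w * ι R t + w * Q := by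
    have hfix : elementaryHom t Q w = w :=
      map_eq_self_of_mem_supported (fun _ hj => elementaryHom_ι_of_ne hj Q) hw
    simp [hfix, mul_add]
  have hconj := apply_mem_elementaryShifts hQG (elementaryHom_ι_of_ne hzt Q) hne hwt
  rw [himage] at hconj
  exact (add_mem_cancel_left hwt).1 hconj

lemma ι_mul_mem_elementaryShifts {z t i : X} (hswap : permAut R (Equiv.swap z t) ∈ G)
    (hzt : z ≠ t) (hit : i ≠ t) (hmul : ι R i * ι R t ∈ elementaryShifts G z)
    {Q : FreeAlgebra R X} (hQ : Q ∈ supported R {z, t}ᶜ) (hQz : Q ∈ elementaryShifts G z) :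
    ι R i * Q ∈ elementaryShifts G z := by
  have hQt : Q ∈ elementaryShifts G t := by
    have hQ_fixed : permAut R (Equiv.swap z t) Q = Q := by
      refine map_eq_self_of_mem_supported (f := (permAut R _).toAlgHom) (fun j hj => ?_) hQ
      obtain ⟨hjz, hjt⟩ : j ≠ z ∧ j ≠ t := by simpa using hj
      simp [Equiv.swap_apply_of_ne_of_ne hjz hjt]
    simpa [hQ_fixed] using permAut_apply_mem_elementaryShifts hswap hQz
  exact mul_mem_elementaryShifts hzt (ι_mem_supported hit) hmul
    (supported_mono (Set.compl_subset_compl.2 (by simp)) hQ) hQt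

theorem contains_z_plus_P_general {x y z t : X} (hxy : x ≠ y) (hxz : x ≠ z) (hyz : y ≠ z)
    (hzt : z ≠ t) (hperm : ∀ σ, permAut R σ ∈ G)
    (hsmul : ∀ c : R, c • ι R x ∈ elementaryShifts G z)
    (hmul : ι R x * ι R y ∈ elementaryShifts G z) {P : FreeAlgebra R X}
    (hP : P ∈ supported R {z, t}ᶜ) (hP0 : algebraMapInv P = 0) : P ∈ elementaryShifts G z := by
  have hlin : ∀ i ∈ ({z, t} : Set X)ᶜ,
      (∀ c : R, c • ι R i ∈ elementaryShifts G z) ∧ ι R i * ι R t ∈ elementaryShifts G z := by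
    intro i hi
    obtain ⟨hiz, hit⟩ : i ≠ z ∧ i ≠ t := by simpa using hi
    obtain ⟨σ, hx, hy, hz⟩ := exists_perm_fixing hxy hxz hyz hit hiz hzt.symm
    constructor
    · intro c
      simpa [hx, hz] using permAut_apply_mem_elementaryShifts (hperm σ) (hsmul c)
    · simpa [hx, hy, hz] using permAut_apply_mem_elementaryShifts (hperm σ) hmul
  let H := elementaryShifts G z ⊓ (Subalgebra.toSubmodule (supported R {z, t}ᶜ)).toAddSubgroup
  suffices h : P ∈ H from h.1
  refine mem_of_algebraMapInv_eq_zero (fun i hi c => ?_) (fun i hi Q hQ => ?_) hP hP0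
  · exact ⟨(hlin i hi).1 c, Subalgebra.smul_mem _ (ι_mem_supported hi) c⟩
  · have hit : i ≠ t := fun h => hi (.inr h)
    exact ⟨ι_mul_mem_elementaryShifts (hperm _) hzt hit (hlin i hi).2 hQ.2 hQ.1,
      (supported R {z, t}ᶜ).mul_mem (ι_mem_supported hi) hQ.2⟩

end Ring

section FourVariables

open FreeAlgebra

variable {K}

lemma isLinearAut_iff_forall_mem_span {φ : FreeAlgebra K (Fin 4) ≃ₐ[K] FreeAlgebra K (Fin 4)} :
    IsLinearAut K φ ↔ ∀ i, φ (ι K i) ∈ Submodule.span K (Set.range (ι K)) := by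
  simp only [IsLinearAut, Submodule.mem_span_range_iff_exists_fun, eq_comm, Classical.skolem]

lemma isLinearAut_permAut (σ : Equiv.Perm (Fin 4)) : IsLinearAut K (permAut K σ) :=
  isLinearAut_iff_forall_mem_span.2 fun i =>
    permAut_ι (R := K) σ i ▸ Submodule.subset_span (Set.mem_range_self _)

lemma smul_ι_mem_elementaryShifts
    {G : Subgroup (FreeAlgebra K (Fin 4) ≃ₐ[K] FreeAlgebra K (Fin 4))}
    (hlin : ∀ φ, IsLinearAut K φ → φ ∈ G) {i j : Fin 4} (hij : i ≠ j) (c : K) :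
    c • ι K i ∈ elementaryShifts G j := by
  refine mem_elementaryShifts_iff.2 ⟨Subalgebra.smul_mem _ (ι_mem_supported hij) c,
    fun φ hj hne => hlin φ (isLinearAut_iff_forall_mem_span.2 fun k => ?_)⟩
  have hmem (l : Fin 4) : ι K l ∈ Submodule.span K (Set.range (ι K)) :=
    Submodule.subset_span (Set.mem_range_self l)
  obtain rfl | hk := eq_or_ne k j
  · simpa only [hj] using add_mem (hmem k) (Submodule.smul_mem _ c (hmem i))
  · simpa only [hne k hk] using hmem k

lemma mem_elementaryShifts_two_iff {R : Type*} [CommRing R]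
    {G : Subgroup (FreeAlgebra R (Fin 4) ≃ₐ[R] FreeAlgebra R (Fin 4))} {P : FreeAlgebra R (Fin 4)} :
    P ∈ elementaryShifts G 2 ↔ P ∈ supported R {2}ᶜ ∧
      ∀ φ : FreeAlgebra R (Fin 4) ≃ₐ[R] FreeAlgebra R (Fin 4),
        (φ (ι R 0) = ι R 0 ∧ φ (ι R 1) = ι R 1 ∧ φ (ι R 2) = ι R 2 + P ∧ φ (ι R 3) = ι R 3) →
          φ ∈ G := by
  rw [mem_elementaryShifts_iff]
  refine and_congr_right' (forall_congr' fun φ => ⟨?_, ?_⟩)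
  · rintro hφ ⟨h0, h1, h2, h3⟩
    refine hφ h2 fun j hj => ?_
    fin_cases j
    exacts [h0, h1, absurd rfl hj, h3]
  · intro hφ h2 hne
    exact hφ ⟨hne 0 (by decide), hne 1 (by decide), h2, hne 3 (by decide)⟩

lemma supported_compl_two_three {R : Type*} [CommSemiring R] :
    supported R ({2, 3}ᶜ : Set (Fin 4)) = Algebra.adjoin R {ι R 0, ι R 1} := by
  have hcompl : ({2, 3}ᶜ : Set (Fin 4)) = {0, 1} := by
    ext i
    fin_cases i <;> simp
  rw [hcompl, supported, Set.image_pair]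

end FourVariables

/-- If a subgroup `G` of `Aut(K⟨x,y,z,t⟩)` contains all linear automorphisms and the
automorphism `x ↦ x, y ↦ y, z ↦ z + xy, t ↦ t`, then for every `P ∈ K⟨x,y⟩` with zero
constant term, `G` contains the automorphism `x ↦ x, y ↦ y, z ↦ z + P(x,y), t ↦ t`. -/
theorem contains_z_plus_P
    (G : Subgroup (FreeAlgebra K (Fin 4) ≃ₐ[K] FreeAlgebra K (Fin 4)))
    (hlin : ∀ φ, IsLinearAut K φ → φ ∈ G)
    (hpsi : ∀ φ : FreeAlgebra K (Fin 4) ≃ₐ[K] FreeAlgebra K (Fin 4),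
      (φ (FreeAlgebra.ι K 0) = FreeAlgebra.ι K 0 ∧
       φ (FreeAlgebra.ι K 1) = FreeAlgebra.ι K 1 ∧
       φ (FreeAlgebra.ι K 2) = FreeAlgebra.ι K 2 + FreeAlgebra.ι K 0 * FreeAlgebra.ι K 1 ∧
       φ (FreeAlgebra.ι K 3) = FreeAlgebra.ι K 3) → φ ∈ G)
    (P : FreeAlgebra K (Fin 4))
    (hP : P ∈ Algebra.adjoin K ({FreeAlgebra.ι K 0, FreeAlgebra.ι K 1} :
            Set (FreeAlgebra K (Fin 4))))
    (hP0 : aug K P = 0)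
    (φ : FreeAlgebra K (Fin 4) ≃ₐ[K] FreeAlgebra K (Fin 4))
    (hφ : φ (FreeAlgebra.ι K 0) = FreeAlgebra.ι K 0 ∧
          φ (FreeAlgebra.ι K 1) = FreeAlgebra.ι K 1 ∧
          φ (FreeAlgebra.ι K 2) = FreeAlgebra.ι K 2 + P ∧
          φ (FreeAlgebra.ι K 3) = FreeAlgebra.ι K 3) :
    φ ∈ G := by
  have hmul : FreeAlgebra.ι K 0 * FreeAlgebra.ι K 1 ∈ elementaryShifts G 2 :=
    mem_elementaryShifts_two_iff.2
      ⟨mul_mem (ι_mem_supported (by simp)) (ι_mem_supported (by simp)), hpsi⟩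
  have hP' : P ∈ supported K {2, 3}ᶜ := supported_compl_two_three (R := K) ▸ hP
  have hPG : P ∈ elementaryShifts G 2 :=
    contains_z_plus_P_general (by decide) (by decide) (by decide) (by decide)
      (fun σ => hlin _ (isLinearAut_permAut σ))
      (smul_ι_mem_elementaryShifts hlin (by decide)) hmul hP' hP0
  exact (mem_elementaryShifts_two_iff.1 hPG).2 φ hφ

end Stmt14
end

section
/- Let K be an infinite field, n ≥ 2, and let I = (i₂,…,iₙ) be a multi-index of nonnegative integers with i₂ + ⋯ + iₙ ≥ 2. For λ₂,…,λₙ ∈ K^× let σ_λ be the automorphism of K[x₁,…,xₙ] given by x₁ ↦ (λ₂^{i₂}⋯λₙ^{iₙ})·x₁ and xⱼ ↦ λⱼxⱼ for j ≥ 2. Then a K-algebra automorphism φ of K[x₁,…,xₙ] commutes with σ_λ for all choices of λ₂,…,λₙ ∈ K^× if and only if there exist ε₁,…,εₙ ∈ K^× and β ∈ K such that φ(x₁) = ε₁x₁ + β·∏_{j≥2} xⱼ^{iⱼ} and φ(xⱼ) = εⱼxⱼ for all j ≥ 2. -/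
/-!
Write `x₁, …, xₙ` as variables indexed by `ι` with a distinguished one `x_{i₀}`. The automorphisms
`σ_λ` form a torus acting diagonally: `xᵢ` is scaled by the character `λ ↦ λ^{W i}`, where
`W i₀ = I` and `W j = e_j` for `j ≠ i₀`. Distinct characters of the torus are distinct functions as
soon as there are infinitely many units, so `φ` commutes with all `σ_λ` exactly when each `φ(xᵢ)`
is homogeneous of multidegree `W i`. The monomial `x^m` has multidegree
`m_{i₀} I + (m without its i₀ entry)`; since `|I| ≥ 2`, this equals `e_j` only for `x^m = x_j`, and
equals `I` only for `x^m = x_{i₀}` or `x^m = x^I`. The inverse of `φ` commutes with the torus too,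
hence has the same shape, and comparing coefficients in `φ ∘ φ⁻¹ = id` shows that the diagonal
coefficients are units.
-/

open MvPolynomial

namespace Stmt16

section Character

variable {κ G : Type*}

/-- The character `λ ↦ λ^u = ∏ₖ λₖ^{uₖ}` of the torus `κ → G` with exponent vector `u`. -/
noncomputable def character [CommMonoid G] (u : κ →₀ ℕ) (l : κ → G) : G :=
  u.prod fun k e ↦ l k ^ e

lemma character_single_one [CommMonoid G] (k : κ) (l : κ → G) :
    character (Finsupp.single k 1) l = l k := by
  simp [character]

lemma character_mulSingle [CommMonoid G] [DecidableEq κ] (u : κ →₀ ℕ) (k : κ) (t : G) :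
    character u (Pi.mulSingle k t) = t ^ u k := by
  rw [character, Finsupp.prod_eq_single k (fun i _ hi ↦ by simp [hi]) (by simp),
    Pi.mulSingle_eq_same]

lemma map_character {H : Type*} [CommMonoid G] [CommMonoid H] (f : G →* H) (u : κ →₀ ℕ)
    (l : κ → G) : f (character u l) = character u (f ∘ l) := by
  simp [character, map_finsuppProd]

lemma character_weight [CommMonoid G] {ι : Type*} (W : ι → κ →₀ ℕ) (m : ι →₀ ℕ) (l : κ → G) :
    character (Finsupp.weight W m) l = m.prod fun i e ↦ character (W i) l ^ e := by
  simp only [character, Finsupp.weight_apply]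
  rw [Finsupp.prod_sum_index (by simp) fun _ _ _ ↦ pow_add _ _ _]
  refine Finsupp.prod_congr fun i _ ↦ ?_
  rw [Finsupp.prod_of_support_subset _ Finsupp.support_smul _ (by simp), Finsupp.prod,
    ← Finset.prod_pow]
  exact Finset.prod_congr rfl fun k _ ↦ by
    rw [Finsupp.smul_apply, smul_eq_mul, mul_comm, pow_mul]

lemma eq_of_forall_units_pow_eq {R : Type*} [CommRing R] [IsDomain R] [Infinite Rˣ] {a b : ℕ}
    (h : ∀ t : Rˣ, t ^ a = t ^ b) : a = b := by
  wlog hab : a ≤ b generalizing a b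
  · exact (this (fun t ↦ (h t).symm) (le_of_not_ge hab)).symm
  by_contra hne
  have : NeZero (b - a) := ⟨by omega⟩
  have all_roots (t : Rˣ) : t ∈ rootsOfUnity (b - a) R := by
    rw [mem_rootsOfUnity, pow_sub t hab, h t, mul_inv_cancel]
  exact not_finite_iff_infinite.2 ‹Infinite Rˣ› <|
    Finite.of_injective (fun t ↦ (⟨t, all_roots t⟩ : rootsOfUnity (b - a) R))
      fun _ _ ↦ congrArg Subtype.val

lemma character_injective {R : Type*} [CommRing R] [IsDomain R] [Infinite Rˣ] :
    Function.Injective (character : (κ →₀ ℕ) → (κ → Rˣ) → Rˣ) := by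
  classical
  intro u v h
  ext k
  refine eq_of_forall_units_pow_eq (R := R) fun t ↦ ?_
  simpa only [character_mulSingle] using congrFun h (Pi.mulSingle k t)

end Character

section TorusAction

variable {ι κ R : Type*}

section CommSemiring

variable [CommSemiring R]

lemma map_monomial_of_map_X_eq {f : MvPolynomial ι R →ₐ[R] MvPolynomial ι R} {ε : ι → R}
    {m : ι →₀ ℕ} (h : ∀ i ∈ m.support, f (X i) = C (ε i) * X i) (a : R) :
    f (monomial m a) = C (character m ε) * monomial m a := by
  have map_prod : f (m.prod fun i k ↦ X i ^ k) =
      C (character m ε) * m.prod fun i k ↦ X i ^ k := by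
    rw [map_finsuppProd, character, map_finsuppProd, ← Finsupp.prod_mul]
    exact Finsupp.prod_congr fun i hi ↦ by rw [map_pow, h i hi, mul_pow, map_pow]
  rw [monomial_eq, map_mul, map_prod, algHom_C, algebraMap_eq, mul_left_comm]

/-- The automorphism of the polynomial algebra scaling each variable `xᵢ` by the unit `wᵢ`. -/
noncomputable def diagonalEquiv (w : ι → Rˣ) : MvPolynomial ι R ≃ₐ[R] MvPolynomial ι R :=
  .ofAlgHom (aeval fun i ↦ C (w i : R) * X i) (aeval fun i ↦ C (↑(w i)⁻¹ : R) * X i)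
    (algHom_ext fun i ↦ by simp [algHom_C, ← mul_assoc, ← C_mul])
    (algHom_ext fun i ↦ by simp [algHom_C, ← mul_assoc, ← C_mul])

@[simp]
lemma diagonalEquiv_X (w : ι → Rˣ) (i : ι) : diagonalEquiv w (X i) = C (w i : R) * X i :=
  aeval_X _ i

/-- The action of the torus `κ → Rˣ` on the polynomial algebra in which `xᵢ` is an eigenvector
for the character with exponent vector `W i`. -/
noncomputable def torusAction (W : ι → κ →₀ ℕ) (l : κ → Rˣ) :
    MvPolynomial ι R ≃ₐ[R] MvPolynomial ι R :=
  diagonalEquiv fun i ↦ character (W i) l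

@[simp]
lemma torusAction_X (W : ι → κ →₀ ℕ) (l : κ → Rˣ) (i : ι) :
    torusAction W l (X i : MvPolynomial ι R) = C (↑(character (W i) l) : R) * X i :=
  diagonalEquiv_X _ i

lemma coeff_torusAction (W : ι → κ →₀ ℕ) (l : κ → Rˣ) (m : ι →₀ ℕ) (p : MvPolynomial ι R) :
    coeff m (torusAction W l p) = ↑(character (Finsupp.weight W m) l) * coeff m p := by
  classical
  induction p using MvPolynomial.induction_on' with
  | monomial u a =>
    have map_monomial :
        torusAction W l (monomial u a) =
          C (↑(character (Finsupp.weight W u) l) : R) * monomial u a := by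
      rw [character_weight, ← character, ← Units.coeHom_apply, map_character]
      exact map_monomial_of_map_X_eq (f := (torusAction W l).toAlgHom)
        (fun i _ ↦ torusAction_X W l i) a
    rw [map_monomial, coeff_C_mul, coeff_monomial]
    split_ifs with h
    · rw [h]
    · simp only [mul_zero]
  | add p q hp hq => rw [map_add, coeff_add, hp, hq, coeff_add, mul_add]

end CommSemiring

variable [CommRing R] [IsDomain R] [Infinite Rˣ]

lemma isWeightedHomogeneous_iff_forall_torusAction {W : ι → κ →₀ ℕ} {p : MvPolynomial ι R}
    {n : κ →₀ ℕ} :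
    IsWeightedHomogeneous W p n ↔
      ∀ l : κ → Rˣ, torusAction W l p = C (↑(character n l) : R) * p := by
  simp only [MvPolynomial.ext_iff, coeff_torusAction, coeff_C_mul]
  constructor
  · intro hp l m
    by_cases hm : coeff m p = 0
    · simp only [hm, mul_zero]
    · rw [hp hm]
  · intro h m hm
    exact character_injective (R := R) <| funext fun l ↦
      Units.ext (mul_right_cancel₀ hm (h l m))

lemma forall_commute_torusAction_iff {W : ι → κ →₀ ℕ}
    {φ : MvPolynomial ι R ≃ₐ[R] MvPolynomial ι R} :
    (∀ l : κ → Rˣ, Commute (torusAction W l) φ) ↔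
      ∀ i, IsWeightedHomogeneous W (φ (X i)) (W i) := by
  have commute_iff (l : κ → Rˣ) : Commute (torusAction W l) φ ↔
      ∀ i, torusAction W l (φ (X i)) = C (↑(character (W i) l) : R) * φ (X i) := by
    have map_torusAction_X (i : ι) :
        φ (torusAction W l (X i)) = C (↑(character (W i) l) : R) * φ (X i) := by
      rw [torusAction_X, map_mul, ← algebraMap_eq, AlgEquiv.commutes]
    simp only [← map_torusAction_X]
    refine ⟨fun h i ↦ DFunLike.congr_fun h (X i), fun h ↦ ?_⟩
    exact AlgEquiv.coe_toAlgHom_injective (algHom_ext h)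
  simp only [commute_iff, isWeightedHomogeneous_iff_forall_torusAction]
  exact forall_comm

end TorusAction

section TorusWeight

variable {ι : Type*} [DecidableEq ι] {i₀ : ι} {I : ι →₀ ℕ}

/-- The multidegrees of the variables under the torus `σ_λ`: the variable `x_{i₀}` has
multidegree `I`, and every other `xⱼ` has multidegree `eⱼ`. -/
noncomputable def torusWeight (i₀ : ι) (I : ι →₀ ℕ) : ι → ι →₀ ℕ :=
  Function.update (fun j ↦ Finsupp.single j 1) i₀ I

@[simp]
lemma torusWeight_self (i₀ : ι) (I : ι →₀ ℕ) : torusWeight i₀ I i₀ = I :=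
  Function.update_self ..

lemma torusWeight_of_ne {j : ι} (hj : j ≠ i₀) : torusWeight i₀ I j = Finsupp.single j 1 :=
  Function.update_of_ne hj ..

lemma weight_torusWeight (i₀ : ι) (I m : ι →₀ ℕ) :
    Finsupp.weight (torusWeight i₀ I) m = m i₀ • I + m.erase i₀ := by
  have weight_erase : Finsupp.weight (torusWeight i₀ I) (m.erase i₀) = m.erase i₀ := by
    conv_rhs => rw [← Finsupp.sum_single (m.erase i₀)]
    refine Finsupp.sum_congr fun j hj ↦ ?_
    rw [Finsupp.support_erase, Finset.mem_erase] at hj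
    simp [torusWeight_of_ne hj.1]
  conv_lhs => rw [← Finsupp.single_add_erase i₀ m]
  rw [map_add, Finsupp.weight_single, torusWeight_self, weight_erase]

lemma degree_weight_torusWeight (i₀ : ι) (I m : ι →₀ ℕ) :
    (Finsupp.weight (torusWeight i₀ I) m).degree = m i₀ * I.degree + (m.erase i₀).degree := by
  rw [weight_torusWeight, map_add, map_nsmul, smul_eq_mul]

lemma eq_single_of_weight_torusWeight_eq_single (hI : 2 ≤ I.degree) {j : ι} {m : ι →₀ ℕ}
    (hm : Finsupp.weight (torusWeight i₀ I) m = Finsupp.single j 1) :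
    m = Finsupp.single j 1 := by
  have degree_eq := degree_weight_torusWeight i₀ I m
  rw [hm, Finsupp.degree_single] at degree_eq
  have hm₀ : m i₀ = 0 := by nlinarith
  rwa [weight_torusWeight, hm₀, zero_nsmul, zero_add,
    Finsupp.erase_of_notMem_support (Finsupp.notMem_support_iff.2 hm₀)] at hm

lemma eq_single_or_eq_of_weight_torusWeight_eq (hI : I ≠ 0) {m : ι →₀ ℕ}
    (hm : Finsupp.weight (torusWeight i₀ I) m = I) :
    m = Finsupp.single i₀ 1 ∨ m = I := by
  have degree_pos : 0 < I.degree := Nat.pos_of_ne_zero (mt (Finsupp.degree_eq_zero_iff I).1 hI)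
  have degree_eq := degree_weight_torusWeight i₀ I m
  rw [hm] at degree_eq
  rw [weight_torusWeight] at hm
  obtain hm₀ | hm₀ : m i₀ = 0 ∨ m i₀ = 1 := by
    have : m i₀ ≤ 1 := by nlinarith
    omega
  · right
    rwa [hm₀, zero_nsmul, zero_add,
      Finsupp.erase_of_notMem_support (Finsupp.notMem_support_iff.2 hm₀)] at hm
  · left
    rw [hm₀, one_nsmul, add_eq_left] at hm
    rw [← Finsupp.single_add_erase i₀ m, hm, hm₀, add_zero]

end TorusWeight

section TriangularForm

variable {ι R : Type*} [CommSemiring R] {i₀ : ι} {I : ι →₀ ℕ}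

lemma ne_single_of_apply_eq_zero (hI₀ : I i₀ = 0) : I ≠ Finsupp.single i₀ 1 := by
  rintro rfl
  simp at hI₀

lemma isWeightedHomogeneous_torusWeight_single_iff [DecidableEq ι] (hI : 2 ≤ I.degree) {j : ι}
    (hj : j ≠ i₀) {p : MvPolynomial ι R} :
    IsWeightedHomogeneous (torusWeight i₀ I) p (Finsupp.single j 1) ↔
      ∃ a : R, p = C a * X j := by
  constructor
  · intro hp
    refine ⟨coeff (Finsupp.single j 1) p, ?_⟩
    rw [C_mul_X_eq_monomial]
    exact hp.eq_monomial_of_unique_weight fun m hm ↦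
      eq_single_of_weight_torusWeight_eq_single hI hm
  · rintro ⟨a, rfl⟩
    have := isWeightedHomogeneous_X R (torusWeight i₀ I) j
    rw [torusWeight_of_ne hj] at this
    exact this.C_mul a

lemma isWeightedHomogeneous_torusWeight_iff [DecidableEq ι] (hI₀ : I i₀ = 0) (hI : I ≠ 0)
    {p : MvPolynomial ι R} :
    IsWeightedHomogeneous (torusWeight i₀ I) p I ↔
      ∃ a b : R, p = C a * X i₀ + monomial I b := by
  constructor
  · intro hp
    have hne : I ≠ Finsupp.single i₀ 1 := ne_single_of_apply_eq_zero hI₀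
    refine ⟨coeff (Finsupp.single i₀ 1) p, coeff I p, ?_⟩
    ext m
    rw [C_mul_X_eq_monomial, coeff_add, coeff_monomial, coeff_monomial]
    by_cases hm : coeff m p = 0
    · split_ifs <;> simp_all
    · obtain rfl | rfl := eq_single_or_eq_of_weight_torusWeight_eq hI (hp hm)
      · rw [if_pos rfl, if_neg hne, add_zero]
      · rw [if_neg hne.symm, if_pos rfl, zero_add]
  · rintro ⟨a, b, rfl⟩
    have := isWeightedHomogeneous_X R (torusWeight i₀ I) i₀
    rw [torusWeight_self] at this
    refine (this.C_mul a).add (isWeightedHomogeneous_monomial _ _ _ ?_)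
    rw [weight_torusWeight, hI₀, zero_nsmul, zero_add,
      Finsupp.erase_of_notMem_support (Finsupp.notMem_support_iff.2 hI₀)]

/-- The shape `x_{i₀} ↦ ε_{i₀} x_{i₀} + β x^I`, `xⱼ ↦ εⱼ xⱼ` for `j ≠ i₀`, of an endomorphism of
the polynomial algebra. The coefficients are not required to be units. -/
def IsTriangular (i₀ : ι) (I : ι →₀ ℕ) (ε : ι → R) (β : R)
    (f : MvPolynomial ι R →ₐ[R] MvPolynomial ι R) : Prop :=
  f (X i₀) = C (ε i₀) * X i₀ + monomial I β ∧ ∀ j, j ≠ i₀ → f (X j) = C (ε j) * X j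

lemma forall_isWeightedHomogeneous_iff_exists_isTriangular [DecidableEq ι] (hI₀ : I i₀ = 0)
    (hI : 2 ≤ I.degree) {f : MvPolynomial ι R →ₐ[R] MvPolynomial ι R} :
    (∀ i, IsWeightedHomogeneous (torusWeight i₀ I) (f (X i)) (torusWeight i₀ I i)) ↔
      ∃ (ε : ι → R) (β : R), IsTriangular i₀ I ε β f := by
  have hI_ne : I ≠ 0 := by
    rintro rfl
    simp at hI
  constructor
  · intro hf
    have exists_coeff (j : ι) (hj : j ≠ i₀) : ∃ a : R, f (X j) = C a * X j :=
      (isWeightedHomogeneous_torusWeight_single_iff hI hj).1 (torusWeight_of_ne hj ▸ hf j)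
    obtain ⟨a, β, h₀⟩ := (isWeightedHomogeneous_torusWeight_iff hI₀ hI_ne).1
      (torusWeight_self i₀ I ▸ hf i₀)
    choose! ε hε using exists_coeff
    refine ⟨Function.update ε i₀ a, β, by rwa [Function.update_self], fun j hj ↦ ?_⟩
    rw [hε j hj, Function.update_of_ne hj]
  · rintro ⟨ε, β, h₀, hε⟩ i
    obtain rfl | hi := eq_or_ne i i₀
    · rw [torusWeight_self]
      exact (isWeightedHomogeneous_torusWeight_iff hI₀ hI_ne).2 ⟨_, _, h₀⟩
    · rw [torusWeight_of_ne hi]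
      exact (isWeightedHomogeneous_torusWeight_single_iff hI hi).2 ⟨_, hε i hi⟩

lemma IsTriangular.mul_eq_one (hI₀ : I i₀ = 0) {ε ε' : ι → R} {β β' : R}
    {f g : MvPolynomial ι R →ₐ[R] MvPolynomial ι R} (hf : IsTriangular i₀ I ε β f)
    (hg : IsTriangular i₀ I ε' β' g) (hfg : ∀ i, f (g (X i)) = X i) (i : ι) :
    ε i * ε' i = 1 := by
  classical
  rw [mul_comm]
  have map_C (a : R) : f (C a) = C a := f.commutes a
  have coeff_eq := congrArg (coeff (Finsupp.single i 1)) (hfg i)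
  obtain rfl | hi := eq_or_ne i i₀
  · have hne := ne_single_of_apply_eq_zero hI₀
    have map_monomial_I : f (monomial I β') = C (character I ε) * monomial I β' :=
      map_monomial_of_map_X_eq (fun j hj ↦ hf.2 j fun h ↦
        Finsupp.mem_support_iff.1 hj (h ▸ hI₀)) β'
    rw [hg.1, map_add, map_mul, map_C, hf.1, map_monomial_I] at coeff_eq
    simpa [coeff_monomial, hne] using coeff_eq
  · rw [hg.2 i hi, map_mul, map_C, hf.2 i hi] at coeff_eq
    simpa using coeff_eq

end TriangularForm

section Commutation

variable {ι R : Type*} {i₀ : ι} {I : ι →₀ ℕ}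

lemma torusAction_torusWeight_eq_iff [DecidableEq ι] [CommSemiring R] {l : ι → Rˣ}
    {σ : MvPolynomial ι R ≃ₐ[R] MvPolynomial ι R} :
    σ = torusAction (torusWeight i₀ I) l ↔
      σ (X i₀) = C (character I fun j ↦ (l j : R)) * X i₀ ∧
        ∀ j, j ≠ i₀ → σ (X j) = C (l j : R) * X j := by
  have val_character : (↑(character I l) : R) = character I fun j ↦ (l j : R) :=
    map_character (Units.coeHom R) I l
  have torusAction_self :
      torusAction (torusWeight i₀ I) l (X i₀) = C (character I fun j ↦ (l j : R)) * X i₀ := by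
    rw [torusAction_X, torusWeight_self, val_character]
  have torusAction_of_ne (j : ι) (hj : j ≠ i₀) :
      torusAction (torusWeight i₀ I) l (X j) = C (l j : R) * X j := by
    rw [torusAction_X, torusWeight_of_ne hj, character_single_one]
  constructor
  · rintro rfl
    exact ⟨torusAction_self, torusAction_of_ne⟩
  · rintro ⟨hσ₀, hσ⟩
    refine AlgEquiv.coe_toAlgHom_injective (algHom_ext fun i ↦ ?_)
    obtain rfl | hi := eq_or_ne i i₀
    · exact hσ₀.trans torusAction_self.symm
    · exact (hσ i hi).trans (torusAction_of_ne i hi).symm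

variable [CommRing R] [IsDomain R] [Infinite Rˣ]

lemma forall_commute_torusWeight_iff_exists_isTriangular [DecidableEq ι] (hI₀ : I i₀ = 0)
    (hI : 2 ≤ I.degree) {φ : MvPolynomial ι R ≃ₐ[R] MvPolynomial ι R} :
    (∀ l : ι → Rˣ, Commute (torusAction (torusWeight i₀ I) l) φ) ↔
      ∃ ε : ι → R, (∀ j, IsUnit (ε j)) ∧ ∃ β : R, IsTriangular i₀ I ε β φ.toAlgHom := by
  have triangular_iff (ψ : MvPolynomial ι R ≃ₐ[R] MvPolynomial ι R) :
      (∀ l : ι → Rˣ, Commute (torusAction (torusWeight i₀ I) l) ψ) ↔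
        ∃ (ε : ι → R) (β : R), IsTriangular i₀ I ε β ψ.toAlgHom :=
    forall_commute_torusAction_iff.trans
      (forall_isWeightedHomogeneous_iff_exists_isTriangular (f := ψ.toAlgHom) hI₀ hI)
  constructor
  · intro hφ
    obtain ⟨ε, β, hε⟩ := (triangular_iff φ).1 hφ
    obtain ⟨ε', β', hε'⟩ := (triangular_iff φ⁻¹).1 fun l ↦ (hφ l).inv_right
    exact ⟨ε, fun j ↦ .of_mul_eq_one _ <|
      hε.mul_eq_one hI₀ hε' (fun i ↦ φ.apply_symm_apply (X i)) j, β, hε⟩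
  · rintro ⟨ε, -, β, hε⟩
    exact (triangular_iff φ).2 ⟨ε, β, hε⟩

theorem commutes_with_weighted_torus_iff_general (hI₀ : I i₀ = 0)
    (hI : 2 ≤ I.degree) (φ : MvPolynomial ι R ≃ₐ[R] MvPolynomial ι R) :
    (∀ l : ι → R, (∀ j, j ≠ i₀ → IsUnit (l j)) →
      ∀ σ : MvPolynomial ι R ≃ₐ[R] MvPolynomial ι R,
        (σ (X i₀) = C (I.prod fun j k ↦ l j ^ k) * X i₀ ∧
          ∀ j, j ≠ i₀ → σ (X j) = C (l j) * X j) →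
        σ * φ = φ * σ) ↔
      ∃ ε : ι → R, (∀ j, IsUnit (ε j)) ∧ ∃ β : R,
        φ (X i₀) = C (ε i₀) * X i₀ + C β * I.prod (fun j k ↦ X j ^ k) ∧
        ∀ j, j ≠ i₀ → φ (X j) = C (ε j) * X j := by
  classical
  simp only [← monomial_eq]
  refine Iff.trans ⟨fun H l ↦ ?_, fun H l hl σ hσ ↦ ?_⟩
    (forall_commute_torusWeight_iff_exists_isTriangular hI₀ hI)
  · exact H (fun j ↦ l j) (fun j _ ↦ (l j).isUnit) _ (torusAction_torusWeight_eq_iff.1 rfl)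
  · choose! u hu using hl
    have character_eq : character I (fun j ↦ (u j : R)) = I.prod fun j k ↦ l j ^ k :=
      Finsupp.prod_congr fun j hj ↦ congrArg (· ^ I j) <|
        hu j fun h ↦ Finsupp.mem_support_iff.1 hj (h ▸ hI₀)
    have σ_eq : σ = torusAction (torusWeight i₀ I) u :=
      torusAction_torusWeight_eq_iff.2
        ⟨character_eq ▸ hσ.1, fun j hj ↦ (hu j hj).symm ▸ hσ.2 j hj⟩
    exact σ_eq ▸ H u

end Commutation

lemma infinite_units (G₀ : Type*) [GroupWithZero G₀] [Infinite G₀] : Infinite G₀ˣ :=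
  unitsEquivNeZero.infinite_iff.2 (Set.finite_singleton (0 : G₀)).infinite_compl.to_subtype

/-- Let `I = (i₂,…,iₙ)` be a multi-index with `i₂ + ⋯ + iₙ ≥ 2`, and for
`λ₂,…,λₙ ∈ K^×` let `σ_λ : x₁ ↦ (∏ⱼ λⱼ^{iⱼ})·x₁, xⱼ ↦ λⱼxⱼ (j ≥ 2)`.
A `K`-algebra automorphism `φ` of `K[x₁,…,xₙ]` (`K` infinite) commutes with all the
`σ_λ` if and only if `φ(x₁) = ε₁x₁ + β·∏_{j≥2} xⱼ^{iⱼ}` and `φ(xⱼ) = εⱼxⱼ (j ≥ 2)`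
for some `εⱼ ∈ K^×`, `β ∈ K`. -/
theorem commutes_with_weighted_torus_iff {K : Type*} [Field K] [Infinite K] {n : ℕ}
    [NeZero n] (hn : 2 ≤ n) (iv : Fin n → ℕ) (hiv0 : iv 0 = 0)
    (hsum : 2 ≤ ∑ j, iv j)
    (φ : MvPolynomial (Fin n) K ≃ₐ[K] MvPolynomial (Fin n) K) :
    (∀ l : Fin n → K, (∀ j, j ≠ 0 → l j ≠ 0) →
      ∀ σ : MvPolynomial (Fin n) K ≃ₐ[K] MvPolynomial (Fin n) K,
        (σ (X 0) = C (∏ j, l j ^ iv j) * X 0 ∧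
          ∀ j, j ≠ 0 → σ (X j) = C (l j) * X j) →
        σ * φ = φ * σ) ↔
      ∃ ε : Fin n → K, (∀ j, ε j ≠ 0) ∧ ∃ β : K,
        φ (X 0) = C (ε 0) * X 0 + C β * ∏ j, X j ^ iv j ∧
        ∀ j, j ≠ 0 → φ (X j) = C (ε j) * X j := by
  have := infinite_units K
  simpa [isUnit_iff_ne_zero, Finsupp.prod_pow] using
    commutes_with_weighted_torus_iff_general (I := Finsupp.equivFunOnFinite.symm iv) hiv0
      (by simpa [Finsupp.degree_eq_sum] using hsum) φ

end Stmt16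
end

section
/- Let K be a field and let a, b ∈ K. On the free associative algebra K⟨x,y,z⟩ define the bilinear operation f * g = a·fg + b·gf. Then * is associative (i.e. (f*g)*h = f*(g*h) for all f, g, h ∈ K⟨x,y,z⟩) if and only if ab = 0. -/
namespace Stmt17

/-! The associator of `*` is a double commutator, `(f * g) * h - f * (g * h) = ab [g, [f, h]]`.
It vanishes when `ab = 0`. Conversely, for distinct generators `x` and `y` no nonzero scalar kills
`[x, [x, y]]`: the representation `x ↦ E₀₀`, `y ↦ E₀₁` by `2 × 2` matrices sends it to `E₀₁`. -/

section StarMul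

variable {R A : Type*} [CommRing R] [NonUnitalRing A] [Module R A] [IsScalarTower R A A]
  [SMulCommClass R A A]

/-- The operation `f * g = a·fg + b·gf`, bundled as a bilinear map. -/
def starMul (a b : R) : A →ₗ[R] A →ₗ[R] A :=
  a • LinearMap.mul R A + b • (LinearMap.mul R A).flip

theorem starMul_apply (a b : R) (f g : A) : starMul a b f g = a • (f * g) + b • (g * f) :=
  rfl

theorem starMul_associator (a b : R) (f g h : A) :
    starMul a b (starMul a b f g) h - starMul a b f (starMul a b g h) =
      (a * b) • ⁅g, ⁅f, h⁆⁆ := by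
  simp only [starMul_apply, Ring.lie_def, mul_add, add_mul, mul_sub, sub_mul, mul_assoc,
    mul_smul_comm, smul_mul_assoc]
  module

theorem starMul_assoc_iff (a b : R) :
    (∀ f g h : A, starMul a b (starMul a b f g) h = starMul a b f (starMul a b g h)) ↔
      ∀ f g h : A, (a * b) • ⁅g, ⁅f, h⁆⁆ = 0 := by
  simp only [← starMul_associator, sub_eq_zero]

end StarMul

theorem lie_single_one_single {n R : Type*} [Fintype n] [DecidableEq n] [Ring R] {i j : n}
    (hij : i ≠ j) (c : R) :
    ⁅Matrix.single i i (1 : R), Matrix.single i j c⁆ = Matrix.single i j c := by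
  rw [Ring.lie_def, Matrix.single_mul_single_same, Matrix.single_mul_single_of_ne (h := hij.symm),
    one_mul, sub_zero]

theorem smul_lie_ι_lie_ι_ι_eq_zero_iff {R X : Type*} [CommRing R] {x y : X} (hxy : x ≠ y) (c : R) :
    c • ⁅FreeAlgebra.ι R x, ⁅FreeAlgebra.ι R x, FreeAlgebra.ι R y⁆⁆ = 0 ↔ c = 0 := by
  classical
  refine ⟨fun hc => ?_, fun hc => by rw [hc, zero_smul]⟩
  let ρ : FreeAlgebra R X →ₐ[R] Matrix (Fin 2) (Fin 2) R :=
    FreeAlgebra.lift R (Function.update (fun _ => Matrix.single 0 0 1) y (Matrix.single 0 1 1))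
  have hρx : ρ (FreeAlgebra.ι R x) = Matrix.single 0 0 1 := by simp [ρ, hxy]
  have hρy : ρ (FreeAlgebra.ι R y) = Matrix.single 0 1 1 := by simp [ρ]
  have hρ : ρ ⁅FreeAlgebra.ι R x, ⁅FreeAlgebra.ι R x, FreeAlgebra.ι R y⁆⁆ =
      Matrix.single 0 1 1 := by
    have hlie (u v : FreeAlgebra R X) : ρ ⁅u, v⁆ = ⁅ρ u, ρ v⁆ := by
      simp only [Ring.lie_def, map_sub, map_mul]
    simp only [hlie, hρx, hρy, lie_single_one_single zero_ne_one]
  have hsingle : c • Matrix.single (0 : Fin 2) (1 : Fin 2) (1 : R) = 0 := by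
    rw [← hρ, ← map_smul, hc, map_zero]
  simpa using congr_fun₂ hsingle 0 1

theorem star_associative_iff_general {R X : Type*} [CommRing R] [Nontrivial X] (a b : R) :
    (∀ f g h : FreeAlgebra R X,
        starMul a b (starMul a b f g) h = starMul a b f (starMul a b g h)) ↔
      a * b = 0 := by
  rw [starMul_assoc_iff]
  constructor
  · intro hassoc
    obtain ⟨x, y, hxy⟩ := exists_pair_ne X
    exact (smul_lie_ι_lie_ι_ι_eq_zero_iff hxy (a * b)).mp (hassoc _ _ _)
  · intro hab f g h
    rw [hab, zero_smul]

/-- On the free associative algebra `K⟨x,y,z⟩`, the bilinear operation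
`f * g = a·fg + b·gf` is associative if and only if `ab = 0`. -/
theorem star_associative_iff {K : Type*} [Field K] (a b : K) :
    (∀ f g h : FreeAlgebra K (Fin 3),
        a • ((a • (f * g) + b • (g * f)) * h) + b • (h * (a • (f * g) + b • (g * f))) =
        a • (f * (a • (g * h) + b • (h * g))) + b • ((a • (g * h) + b • (h * g)) * f)) ↔
      a * b = 0 :=
  star_associative_iff_general a b

end Stmt17
end

section
/- Let R be a commutative ring, n ≥ 1, and x₁,…,xₙ ∈ R. Then the alternating sum over nonempty subsets S of {1,…,n} of (−1)^{n−|S|}·(Σ_{i∈S} xᵢ)^n equals n!·x₁⋯xₙ; moreover, for every integer m with 1 ≤ m < n, the alternating sum over nonempty subsets S of {1,…,n} of (−1)^{n−|S|}·(Σ_{i∈S} xᵢ)^m equals 0. -/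
namespace Stmt18

/-! Expanding the product of the partial sums `∑ i ∈ S, a i j` over `j` gives one monomial for each
function `f` with values in `S`. The signs of all the sets `S` containing the range of `f` cancel
unless `f` is surjective, so the alternating sum keeps exactly the surjective `f`. When there are
as many factors as indices these are the permutations, and the sum is a permanent (Ryser's formula);
when there are fewer factors, there are none. -/

section

open Finset

variable {R ι : Type*} [Fintype ι] [DecidableEq ι]

lemma sum_superset_neg_one_pow_card_compl [Ring R] (T : Finset ι) :
    ∑ S with T ⊆ S, (-1 : R) ^ #Sᶜ = if T = univ then 1 else 0 := by
  calc ∑ S with T ⊆ S, (-1 : R) ^ #Sᶜ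
      = ∑ U ∈ Tᶜ.powerset, (-1 : R) ^ #U :=
        sum_nbij' compl compl (by simp) (by simp [subset_compl_comm]) (by simp) (by simp) (by simp)
    _ = if T = univ then 1 else 0 := by
        simpa using congrArg (Int.cast : ℤ → R) (sum_powerset_neg_one_pow_card (x := Tᶜ))

lemma sum_neg_one_pow_card_compl_mul_prod_sum [CommRing R] {κ : Type*} [Fintype κ] [DecidableEq κ]
    (a : ι → κ → R) :
    ∑ S, (-1) ^ #Sᶜ * ∏ j, ∑ i ∈ S, a i j =
      ∑ f : κ → ι with f.Surjective, ∏ j, a (f j) j := by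
  have image_univ_eq_univ_iff (f : κ → ι) : univ.image f = univ ↔ f.Surjective := by
    simp [eq_univ_iff_forall, Function.Surjective]
  calc ∑ S, (-1) ^ #Sᶜ * ∏ j, ∑ i ∈ S, a i j
      = ∑ S, ∑ f ∈ Fintype.piFinset fun _ : κ ↦ S, (-1) ^ #Sᶜ * ∏ j, a (f j) j := by
        simp only [prod_univ_sum, mul_sum]
    _ = ∑ f : κ → ι, ∑ S with univ.image f ⊆ S, (-1) ^ #Sᶜ * ∏ j, a (f j) j :=
        sum_comm' (by simp [image_subset_iff])
    _ = ∑ f : κ → ι, if f.Surjective then ∏ j, a (f j) j else 0 := by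
        simp only [← sum_mul, sum_superset_neg_one_pow_card_compl, ite_mul, one_mul, zero_mul,
          image_univ_eq_univ_iff]
    _ = ∑ f : κ → ι with f.Surjective, ∏ j, a (f j) j := (sum_filter _ _).symm

lemma sum_surjective_eq_sum_perm {M : Type*} [AddCommMonoid M] (g : (ι → ι) → M) :
    ∑ f : ι → ι with f.Surjective, g f = ∑ σ : Equiv.Perm ι, g σ := by
  symm
  refine sum_bij (fun σ _ ↦ ⇑σ) (by simp [Equiv.surjective]) (by simp) (fun f hf ↦ ?_) (by simp)
  have hf : f.Bijective := Finite.surjective_iff_bijective.mp (mem_filter_univ f |>.mp hf)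
  exact ⟨.ofBijective f hf, mem_univ _, rfl⟩

theorem sum_neg_one_pow_card_compl_mul_prod_sum_eq_permanent [CommRing R] (A : Matrix ι ι R) :
    ∑ S, (-1) ^ #Sᶜ * ∏ j, ∑ i ∈ S, A i j = A.permanent :=
  (sum_neg_one_pow_card_compl_mul_prod_sum fun i j ↦ A i j).trans (sum_surjective_eq_sum_perm _)

lemma permanent_replicateCol [CommSemiring R] (x : ι → R) :
    (Matrix.replicateCol ι x).permanent = (Fintype.card ι).factorial * ∏ i, x i := by
  simp [Matrix.permanent, Equiv.prod_comp, Fintype.card_perm]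

lemma sum_neg_one_pow_card_compl_mul_sum_pow_card [CommRing R] (x : ι → R) :
    ∑ S, (-1) ^ #Sᶜ * (∑ i ∈ S, x i) ^ Fintype.card ι =
      (Fintype.card ι).factorial * ∏ i, x i := by
  simpa [permanent_replicateCol] using
    sum_neg_one_pow_card_compl_mul_prod_sum_eq_permanent (Matrix.replicateCol ι x)

lemma sum_neg_one_pow_card_compl_mul_sum_pow_eq_zero [CommRing R] (x : ι → R) {m : ℕ}
    (hm : m < Fintype.card ι) :
    ∑ S, (-1) ^ #Sᶜ * (∑ i ∈ S, x i) ^ m = 0 := by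
  have not_surjective (f : Fin m → ι) : ¬ f.Surjective := fun hf ↦
    hm.not_ge (by simpa using Fintype.card_le_of_surjective f hf)
  simpa [not_surjective] using
    sum_neg_one_pow_card_compl_mul_prod_sum (fun i (_ : Fin m) ↦ x i)

lemma sum_nonempty_neg_one_pow_mul_sum_pow [Ring R] (x : ι → R) {m : ℕ} (hm : m ≠ 0) :
    ∑ S with S.Nonempty, (-1) ^ (Fintype.card ι - #S) * (∑ i ∈ S, x i) ^ m =
      ∑ S, (-1) ^ #Sᶜ * (∑ i ∈ S, x i) ^ m := by
  simp only [card_compl]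
  refine sum_filter_of_ne fun S _ hS ↦ nonempty_iff_ne_empty.mpr ?_
  rintro rfl
  simp [hm] at hS

end

open Finset in
theorem alternating_power_sums_general {R ι : Type*} [CommRing R] [Fintype ι] [Nonempty ι]
    (x : ι → R) :
    ∑ S with S.Nonempty, (-1) ^ (Fintype.card ι - #S) * (∑ i ∈ S, x i) ^ Fintype.card ι =
      (Fintype.card ι).factorial * ∏ i, x i ∧
    ∀ m, 1 ≤ m → m < Fintype.card ι →
      ∑ S with S.Nonempty, (-1) ^ (Fintype.card ι - #S) * (∑ i ∈ S, x i) ^ m = 0 := by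
  classical
  refine ⟨?_, fun m hm hmn ↦ ?_⟩
  · rw [sum_nonempty_neg_one_pow_mul_sum_pow x Fintype.card_ne_zero,
      sum_neg_one_pow_card_compl_mul_sum_pow_card]
  · rw [sum_nonempty_neg_one_pow_mul_sum_pow x (Nat.one_le_iff_ne_zero.mp hm),
      sum_neg_one_pow_card_compl_mul_sum_pow_eq_zero x hmn]

/-- Inclusion–exclusion identity: the alternating sum over nonempty subsets `S` of
`{1,…,n}` of `(−1)^{n−|S|}(Σ_{i∈S} xᵢ)^n` equals `n!·x₁⋯xₙ`, and the analogous
alternating sum with exponent `m`, `1 ≤ m < n`, vanishes. -/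
theorem alternating_power_sums {R : Type*} [CommRing R] (n : ℕ) (hn : 1 ≤ n)
    (x : Fin n → R) :
    (∑ S ∈ Finset.univ.powerset.filter (fun S : Finset (Fin n) => S.Nonempty),
        (-1 : R) ^ (n - S.card) * (∑ i ∈ S, x i) ^ n) =
      (n.factorial : R) * ∏ i, x i ∧
    ∀ m : ℕ, 1 ≤ m → m < n →
      (∑ S ∈ Finset.univ.powerset.filter (fun S : Finset (Fin n) => S.Nonempty),
          (-1 : R) ^ (n - S.card) * (∑ i ∈ S, x i) ^ m) = 0 := by
  have : Nonempty (Fin n) := ⟨⟨0, hn⟩⟩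
  simpa only [Finset.powerset_univ, Fintype.card_fin] using alternating_power_sums_general x

end Stmt18
end
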